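/- Let s ∈ (0,1), u ∈ C_c^∞(ℝⁿ), and let U be its Caffarelli–Silvestre extension. Assume ∫₀^∞∫_{ℝⁿ} z^{1−2s} ( |∇_x² U(x,z)|² + |∇_x ∂_z U(x,z)|² ) dx dz < ∞. Then the function x ↦ Γ₁(u,u)(x) is twice continuously differentiable and, for every x ∈ ℝⁿ, ½ Δ( Γ₁(u,u) )(x) − Γ₁(u, Δu)(x) = β_s ∫₀^∞ ( P_z^{(s)} ∗ ( |∇_x² U(·,z)|² + |∇_x ∂_z U(·,z)|² ) )(x) z^{1−2s} dz, where Δ is the classical Laplacian on ℝⁿ and |∇_x² U|² is the squared Frobenius norm of the Hessian in the x-variables. -/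

import Mathlib

open MeasureTheory Filter Set
open scoped Topology ENNReal NNReal

noncomputable section

/-- `ℝⁿ` with the Euclidean norm. -/
abbrev En (n : ℕ) := EuclideanSpace ℝ (Fin n)

/-- The normalizing constant `p(n,s) = Γ(n/2+s)/(π^{n/2} Γ(s))` of the Poisson kernel. -/
def pns (n : ℕ) (s : ℝ) : ℝ :=
  Real.Gamma ((n : ℝ) / 2 + s) / (Real.pi ^ ((n : ℝ) / 2) * Real.Gamma s)

/-- The fractional Poisson kernel `P_z^{(s)}(x) = p(n,s) z^{2s} (|x|² + z²)^{-(n+2s)/2}`. -/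
def Pker (n : ℕ) (s z : ℝ) (x : En n) : ℝ :=
  pns n s * z ^ (2 * s) * (‖x‖ ^ 2 + z ^ 2) ^ (-((n : ℝ) + 2 * s) / 2)

/-- Convolution with the fractional Poisson kernel in the first variable, at fixed `z`. -/
def Pconv (n : ℕ) (s z : ℝ) (f : En n → ℝ) (x : En n) : ℝ :=
  ∫ y, Pker n s z (x - y) * f y

/-- The Caffarelli–Silvestre extension `U(x,z) = (P_z^{(s)} ∗ u)(x)`. -/
def CSext (n : ℕ) (s : ℝ) (u : En n → ℝ) (x : En n) (z : ℝ) : ℝ :=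
  Pconv n s z u x

/-- The constant `C(n,s) = 4^s Γ(n/2+s) / (π^{n/2} |Γ(-s)|)`. -/
def Cns (n : ℕ) (s : ℝ) : ℝ :=
  4 ^ s * Real.Gamma ((n : ℝ) / 2 + s) / (Real.pi ^ ((n : ℝ) / 2) * |Real.Gamma (-s)|)

/-- The fractional Laplacian `(-Δ)^s w(x)` as a principal-value singular integral. -/
def fracLap (n : ℕ) (s : ℝ) (w : En n → ℝ) (x : En n) : ℝ :=
  Cns n s * limUnder (𝓝[>] (0 : ℝ))
    (fun ε : ℝ => ∫ y in {y : En n | ε < ‖x - y‖}, (w x - w y) / ‖x - y‖ ^ ((n : ℝ) + 2 * s))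

/-- `Λ^s w := -(-Δ)^s w`. -/
def Lam (n : ℕ) (s : ℝ) (w : En n → ℝ) (x : En n) : ℝ := - fracLap n s w x

/-- The first-order carré du champ `Γ₁(u,v) = ½(Λ^s(uv) - u Λ^s v - v Λ^s u)`. -/
def Gamma1 (n : ℕ) (s : ℝ) (u v : En n → ℝ) (x : En n) : ℝ :=
  (Lam n s (fun y => u y * v y) x - u x * Lam n s v x - v x * Lam n s u x) / 2

/-- The constant `β_s = 2^{2s-1} Γ(s)/Γ(1-s)`. -/
def betaS (s : ℝ) : ℝ := 2 ^ (2 * s - 1) * Real.Gamma s / Real.Gamma (1 - s)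

/-- Partial derivative in the `i`-th coordinate direction. -/
def pd {n : ℕ} (i : Fin n) (f : En n → ℝ) (x : En n) : ℝ :=
  fderiv ℝ f x (EuclideanSpace.single i 1)

/-- The Laplacian in the `x`-variables. -/
def lapX {n : ℕ} (f : En n → ℝ) (x : En n) : ℝ := ∑ i, pd i (pd i f) x

/-- The degenerate operator `L_s W = div_{x,z}(z^{1-2s} ∇̃W)`, written out as
`z^{1-2s} Δ_x W + ∂_z(z^{1-2s} ∂_z W)`. -/
def LsOp {n : ℕ} (s : ℝ) (W : En n → ℝ → ℝ) (x : En n) (z : ℝ) : ℝ :=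
  z ^ (1 - 2 * s) * lapX (fun y => W y z) x
    + deriv (fun t => t ^ (1 - 2 * s) * deriv (W x) t) z

/-!
Writing the fractional Laplacian through symmetric second differences turns `Γ₁` into
`Γ₁(f, g)(x) = C(n,s)/2 ∫ (f(x) - f(x - h)) (g(x) - g(x - h)) |h|^{-n-2s} dh`. This bilinear form
commutes with translations, so `∂ᵢ Γ₁(f, g) = Γ₁(∂ᵢ f, g) + Γ₁(f, ∂ᵢ g)`, and applying this twice
gives `½ Δ Γ₁(u, u) - Γ₁(u, Δu) = ∑ᵢ Γ₁(∂ᵢ u, ∂ᵢ u)`.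

It remains to see that `Γ₁(v, v)(x)` is `β_s` times the Poisson-weighted energy of the extension `V`
of `v = ∂ᵢ u`. Put `W = V - v(x)`. Both the Poisson kernel `P` and `W` solve the degenerate equation
`div(z^{1-2s} ∇ ·) = 0`, so `∂_z ∫ (P z^{1-2s} ∂_z (W²) - W² z^{1-2s} ∂_z P) dy` equals
`2 z^{1-2s} ∫ P |∇W|² dy` (Green's identity in `y`). Integrate over `0 < z < ∞`: the flux vanishes
at `z = ∞`, while at `z = 0` its first term tends to `0` by Hölder continuity of `v`, and its second
to a multiple of `∫ (v(y) - v(x))² |x - y|^{-n-2s} dy`.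
-/

open Module (finrank)
open scoped ContDiff

section RadialPow

variable {E : Type*} [NormedAddCommGroup E] {b c z : ℝ}

/-- The radial function `w ↦ (|w|² + z²)^(-b/2)` of homogeneity degree `-b` in `(w, z)`, from which
the Poisson kernel, its derivatives and all the bounds on them are built. -/
def radialPow (b z : ℝ) (w : E) : ℝ := (‖w‖ ^ 2 + z ^ 2) ^ (-b / 2)

lemma sq_rpow_div_two {r : ℝ} (hr : 0 ≤ r) (p : ℝ) : (r ^ 2) ^ (p / 2) = r ^ p := by
  rw [← Real.rpow_natCast, ← Real.rpow_mul hr]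
  congr 1
  push_cast
  ring

lemma radialPow_pos (hz : 0 < z) (w : E) : 0 < radialPow b z w :=
  Real.rpow_pos_of_pos (by positivity) _

lemma continuous_radialPow (hz : 0 < z) : Continuous (radialPow b z : E → ℝ) :=
  Continuous.rpow_const (by fun_prop) fun _ ↦ Or.inl (by positivity)

lemma radialPow_mul_radialPow (hz : 0 < z) (w : E) :
    radialPow b z w * radialPow c z w = radialPow (b + c) z w := by
  rw [radialPow, radialPow, radialPow, ← Real.rpow_add (by positivity)]
  congr 1
  ring

lemma radialPow_neg_two (w : E) : radialPow (-2) z w = ‖w‖ ^ 2 + z ^ 2 := by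
  simp [radialPow]

lemma norm_sq_mul_radialPow_add_two (hz : 0 < z) (w : E) :
    ‖w‖ ^ 2 * radialPow (b + 2) z w = radialPow b z w - z ^ 2 * radialPow (b + 2) z w := by
  have h : radialPow b z w = radialPow (-2) z w * radialPow (b + 2) z w := by
    rw [radialPow_mul_radialPow hz]
    congr 1
    ring
  rw [h, radialPow_neg_two]
  ring

lemma norm_rpow_le_radialPow_neg {θ : ℝ} (hθ : 0 ≤ θ) (w : E) : ‖w‖ ^ θ ≤ radialPow (-θ) z w :=
  calc ‖w‖ ^ θ = (‖w‖ ^ 2) ^ (θ / 2) := (sq_rpow_div_two (norm_nonneg w) θ).symm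
    _ ≤ (‖w‖ ^ 2 + z ^ 2) ^ (θ / 2) := by gcongr; linarith [sq_nonneg z]
    _ = radialPow (-θ) z w := by rw [radialPow, neg_neg]

lemma rpow_le_radialPow_neg {θ : ℝ} (hθ : 0 ≤ θ) (hz : 0 ≤ z) (w : E) :
    z ^ θ ≤ radialPow (-θ) z w :=
  calc z ^ θ = (z ^ 2) ^ (θ / 2) := (sq_rpow_div_two hz θ).symm
    _ ≤ (‖w‖ ^ 2 + z ^ 2) ^ (θ / 2) := by gcongr; linarith [sq_nonneg ‖w‖]
    _ = radialPow (-θ) z w := by rw [radialPow, neg_neg]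

lemma radialPow_le_norm_rpow (hb : 0 ≤ b) {w : E} (hw : w ≠ 0) :
    radialPow b z w ≤ ‖w‖ ^ (-b) :=
  calc radialPow b z w ≤ (‖w‖ ^ 2) ^ (-b / 2) :=
        Real.rpow_le_rpow_of_nonpos (by positivity) (by linarith [sq_nonneg z]) (by linarith)
    _ = ‖w‖ ^ (-b) := sq_rpow_div_two (norm_nonneg w) (-b)

lemma radialPow_le_rpow (hb : 0 ≤ b) (hz : 0 < z) (w : E) : radialPow b z w ≤ z ^ (-b) :=
  calc radialPow b z w ≤ (z ^ 2) ^ (-b / 2) :=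
        Real.rpow_le_rpow_of_nonpos (by positivity) (by linarith [sq_nonneg ‖w‖]) (by linarith)
    _ = z ^ (-b) := sq_rpow_div_two hz.le (-b)

lemma radialPow_add_two_le (hz : 0 < z) (w : E) :
    radialPow (b + 2) z w ≤ z ^ (-2 : ℝ) * radialPow b z w := by
  rw [add_comm, ← radialPow_mul_radialPow hz]
  exact mul_le_mul_of_nonneg_right (radialPow_le_rpow zero_le_two hz w) (radialPow_pos hz w).le

lemma radialPow_anti {z₁ z₂ : ℝ} (hz₁ : 0 < z₁) (hz : z₁ ≤ z₂) (hb : 0 ≤ b) (w : E) :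
    radialPow b z₂ w ≤ radialPow b z₁ w :=
  Real.rpow_le_rpow_of_nonpos (by positivity) (by gcongr) (by linarith)

lemma hasDerivAt_radialPow (hz : 0 < z) (w : E) :
    HasDerivAt (fun t ↦ radialPow b t w) (-b * z * radialPow (b + 2) z w) z := by
  have hsq : HasDerivAt (fun t : ℝ ↦ ‖w‖ ^ 2 + t ^ 2) (2 * z) z := by
    simpa using (hasDerivAt_pow 2 z).const_add (‖w‖ ^ 2)
  refine (hsq.rpow_const (p := -b / 2) (Or.inl (by positivity))).congr_deriv ?_
  rw [radialPow, show -(b + 2) / 2 = -b / 2 - 1 by ring]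
  ring

lemma tendsto_radialPow_nhdsGT_zero {w : E} (hw : w ≠ 0) :
    Tendsto (fun z ↦ radialPow b z w) (𝓝[>] 0) (𝓝 (‖w‖ ^ (-b))) := by
  have hcont : ContinuousAt (fun z ↦ radialPow b z w) 0 :=
    ContinuousAt.rpow_const (by fun_prop) (Or.inl (by positivity))
  have hzero : radialPow b 0 w = ‖w‖ ^ (-b) := by
    rw [radialPow, zero_pow two_ne_zero, add_zero, sq_rpow_div_two (norm_nonneg w)]
  exact hzero ▸ hcont.tendsto.mono_left nhdsWithin_le_nhds

lemma radialPow_eq_smul [NormedSpace ℝ E] (hz : 0 < z) (w : E) :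
    radialPow b z w = z ^ (-b) * radialPow b 1 (z⁻¹ • w) := by
  have h : ‖w‖ ^ 2 + z ^ 2 = z ^ 2 * (‖z⁻¹ • w‖ ^ 2 + 1 ^ 2) := by
    rw [norm_smul, norm_inv, Real.norm_of_nonneg hz.le]
    field_simp
  rw [radialPow, radialPow, h, Real.mul_rpow (by positivity) (by positivity),
    sq_rpow_div_two hz.le]

section Integral

variable [NormedSpace ℝ E] [FiniteDimensional ℝ E] [MeasurableSpace E] [BorelSpace E]
  {μ : Measure E} [μ.IsAddHaarMeasure]

lemma integrable_radialPow (hz : 0 < z) (hb : (finrank ℝ E : ℝ) < b) :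
    Integrable (radialPow b z) μ := by
  have hone : Integrable (radialPow b 1) μ :=
    (integrable_rpow_neg_one_add_norm_sq hb).congr
      (ae_of_all _ fun w ↦ by simp [radialPow, add_comm])
  have hscale : radialPow b z = fun w : E ↦ z ^ (-b) * radialPow b 1 (z⁻¹ • w) :=
    funext (radialPow_eq_smul hz)
  exact hscale ▸ (hone.comp_smul (inv_ne_zero hz.ne')).const_mul _

lemma integral_radialPow (hz : 0 < z) :
    ∫ w, radialPow b z w ∂μ = z ^ (finrank ℝ E - b) * ∫ w, radialPow b 1 w ∂μ := by
  simp_rw [fun w : E ↦ radialPow_eq_smul (b := b) hz w]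
  rw [integral_const_mul, Measure.integral_comp_inv_smul_of_nonneg _ _ hz.le, smul_eq_mul,
    ← mul_assoc, ← Real.rpow_natCast, ← Real.rpow_add hz]
  congr 2
  ring

end Integral

end RadialPow

section Gradient

variable {E : Type*} [NormedAddCommGroup E] [InnerProductSpace ℝ E] {b z : ℝ}

lemma hasFDerivAt_radialPow (hz : 0 < z) (w : E) :
    HasFDerivAt (radialPow b z) ((-b * radialPow (b + 2) z w) • innerSL ℝ w) w := by
  have hsq : HasFDerivAt (fun t : E ↦ ‖t‖ ^ 2 + z ^ 2) (2 • innerSL ℝ w) w :=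
    (hasStrictFDerivAt_norm_sq w).hasFDerivAt.add_const _
  refine (hsq.rpow_const (p := -b / 2) (Or.inl (by positivity))).congr_fderiv ?_
  rw [radialPow, show -(b + 2) / 2 = -b / 2 - 1 by ring]
  module

end Gradient

section Normalization

variable {E : Type*} [NormedAddCommGroup E] {b : ℝ}

/-- The integrand `t^(b-1) e^(-(1+|w|²)t)` of the subordination formula, which writes
`(1+|w|²)^(-b)` as a superposition of Gaussians. -/
def gaussianMixture (b t : ℝ) (w : E) : ℝ := t ^ (b - 1) * Real.exp (-((1 + ‖w‖ ^ 2) * t))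

lemma integral_gaussianMixture_Ioi (hb : 0 < b) (w : E) :
    ∫ t in Ioi (0 : ℝ), gaussianMixture b t w = Real.Gamma b * radialPow (2 * b) 1 w := by
  simp_rw [gaussianMixture]
  rw [Real.integral_rpow_mul_exp_neg_mul_Ioi hb (by positivity), mul_comm, radialPow, one_div,
    Real.inv_rpow (by positivity), ← Real.rpow_neg (by positivity)]
  congr 2 <;> ring

lemma gaussianMixture_eq_mul (b t : ℝ) (w : E) :
    gaussianMixture b t w = t ^ (b - 1) * Real.exp (-t) * Real.exp (-t * ‖w‖ ^ 2) := by
  rw [gaussianMixture, mul_assoc, ← Real.exp_add]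
  congr 2
  ring

variable [InnerProductSpace ℝ E] [FiniteDimensional ℝ E] [MeasurableSpace E] [BorelSpace E]

lemma integral_gaussianMixture {t : ℝ} (ht : 0 < t) :
    ∫ w : E, gaussianMixture b t w =
      Real.pi ^ (finrank ℝ E / 2 : ℝ) * (Real.exp (-t) * t ^ (b - finrank ℝ E / 2 - 1)) := by
  simp_rw [gaussianMixture_eq_mul]
  rw [integral_const_mul, GaussianFourier.integral_rexp_neg_mul_sq_norm ht,
    Real.div_rpow Real.pi_pos.le ht.le, sub_right_comm b, Real.rpow_sub ht (b - 1)]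
  ring

lemma integrable_gaussianMixture {t : ℝ} (ht : 0 < t) :
    Integrable (gaussianMixture b t : E → ℝ) :=
  .of_integral_ne_zero <| by
    rw [integral_gaussianMixture ht]
    positivity

lemma integrable_uncurry_gaussianMixture (hb : finrank ℝ E / 2 < b) :
    Integrable (Function.uncurry (gaussianMixture b : ℝ → E → ℝ))
      ((volume.restrict (Ioi 0)).prod volume) := by
  have hmeas : Measurable (Function.uncurry (gaussianMixture b : ℝ → E → ℝ)) := by
    unfold Function.uncurry gaussianMixture
    fun_prop
  rw [integrable_prod_iff hmeas.aestronglyMeasurable]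
  constructor
  · filter_upwards [ae_restrict_mem measurableSet_Ioi] with t ht
    exact integrable_gaussianMixture ht
  · refine ((Real.GammaIntegral_convergent (sub_pos.2 hb)).const_mul
      (Real.pi ^ (finrank ℝ E / 2 : ℝ))).congr ?_
    filter_upwards [ae_restrict_mem measurableSet_Ioi] with t (ht : 0 < t)
    rw [← integral_gaussianMixture ht]
    refine integral_congr_ae (ae_of_all _ fun w ↦ ?_)
    exact (Real.norm_of_nonneg (by unfold gaussianMixture; positivity)).symm

lemma Gamma_mul_integral_radialPow (hb : finrank ℝ E / 2 < b) :
    Real.Gamma b * ∫ w : E, radialPow (2 * b) 1 w =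
      Real.pi ^ (finrank ℝ E / 2 : ℝ) * Real.Gamma (b - finrank ℝ E / 2) := by
  have hb₀ : 0 < b := hb.trans_le' (by positivity)
  calc Real.Gamma b * ∫ w : E, radialPow (2 * b) 1 w
      = ∫ w : E, ∫ t in Ioi (0 : ℝ), gaussianMixture b t w := by
        simp_rw [integral_gaussianMixture_Ioi hb₀]
        rw [integral_const_mul]
    _ = ∫ t in Ioi (0 : ℝ), ∫ w : E, gaussianMixture b t w :=
        (integral_integral_swap (integrable_uncurry_gaussianMixture hb)).symm
    _ = ∫ t in Ioi (0 : ℝ), Real.pi ^ (finrank ℝ E / 2 : ℝ) *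
          (Real.exp (-t) * t ^ (b - finrank ℝ E / 2 - 1)) :=
        setIntegral_congr_fun measurableSet_Ioi fun t ht ↦ integral_gaussianMixture ht
    _ = _ := by rw [integral_const_mul, Real.Gamma_eq_integral (sub_pos.2 hb)]

end Normalization

section PartialDerivatives

variable {n : ℕ} {f g : En n → ℝ} {i : Fin n}

lemma pd_sub_const (f : En n → ℝ) (c : ℝ) (i : Fin n) : pd i (fun y ↦ f y - c) = pd i f := by
  ext y
  simp only [pd, fderiv_sub_const]

lemma pd_const_mul (hf : Differentiable ℝ f) (c : ℝ) (i : Fin n) :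
    pd i (fun y ↦ c * f y) = fun y ↦ c * pd i f y := by
  ext y
  simp [pd, fderiv_const_mul (hf y)]

lemma pd_add (hf : Differentiable ℝ f) (hg : Differentiable ℝ g) (i : Fin n) :
    pd i (fun y ↦ f y + g y) = fun y ↦ pd i f y + pd i g y := by
  ext y
  simp [pd, fderiv_fun_add (hf y) (hg y)]

lemma pd_mul (hf : Differentiable ℝ f) (hg : Differentiable ℝ g) (i : Fin n) :
    pd i (fun y ↦ f y * g y) = fun y ↦ f y * pd i g y + g y * pd i f y := by
  ext y
  simp [pd, fderiv_fun_mul (hf y) (hg y)]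

lemma pd_sub_left (hf : Differentiable ℝ f) (x : En n) (i : Fin n) :
    pd i (fun y ↦ f (x - y)) = fun y ↦ -pd i f (x - y) := by
  ext y
  have h := (hf (x - y)).hasFDerivAt.comp y ((hasFDerivAt_id y).const_sub x)
  simp [pd, show fderiv ℝ (fun y ↦ f (x - y)) y = _ from h.fderiv]

lemma contDiff_pd {k m : WithTop ℕ∞} (hf : ContDiff ℝ m f) (hkm : k + 1 ≤ m) (i : Fin n) :
    ContDiff ℝ k (pd i f) :=
  (hf.fderiv_right hkm).clm_apply contDiff_const

lemma differentiable_pd (hf : ContDiff ℝ 2 f) (i : Fin n) : Differentiable ℝ (pd i f) :=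
  (contDiff_pd (k := 1) hf (by norm_num) i).differentiable one_ne_zero

lemma continuous_pd_pd (hf : ContDiff ℝ 2 f) (i : Fin n) : Continuous (pd i (pd i f)) :=
  (contDiff_pd (k := 0) (contDiff_pd (k := 1) hf (by norm_num) i) (by norm_num) i).continuous

lemma pd_pd_sub_left (hf : ContDiff ℝ 2 f) (x : En n) (i : Fin n) :
    pd i (pd i (fun y ↦ f (x - y))) = fun y ↦ pd i (pd i f) (x - y) := by
  have hd : Differentiable ℝ fun y ↦ pd i f (x - y) := (differentiable_pd hf i).comp (by fun_prop)
  simp only [pd_sub_left (hf.differentiable two_ne_zero), neg_eq_neg_one_mul (pd i f _),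
    pd_const_mul hd, pd_sub_left (differentiable_pd hf i)]
  simp only [neg_mul, one_mul, neg_neg]

lemma lapX_sub_left (hf : ContDiff ℝ 2 f) (x y : En n) :
    lapX (fun y ↦ f (x - y)) y = lapX f (x - y) := by
  simp only [lapX, pd_pd_sub_left hf]

lemma lapX_const_mul (hf : ContDiff ℝ 2 f) (c : ℝ) (y : En n) :
    lapX (fun y ↦ c * f y) y = c * lapX f y := by
  simp only [lapX, pd_const_mul (hf.differentiable two_ne_zero),
    pd_const_mul (differentiable_pd hf _), Finset.mul_sum]

lemma pd_pd_mul (hf : ContDiff ℝ 2 f) (hg : ContDiff ℝ 2 g) (i : Fin n) :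
    pd i (pd i (fun y ↦ f y * g y)) =
      fun y ↦ f y * pd i (pd i g) y + 2 * (pd i f y * pd i g y) + g y * pd i (pd i f) y := by
  have hf₁ := hf.differentiable two_ne_zero
  have hg₁ := hg.differentiable two_ne_zero
  have hf₂ := differentiable_pd hf i
  have hg₂ := differentiable_pd hg i
  rw [pd_mul hf₁ hg₁, pd_add (hf₁.fun_mul hg₂) (hg₁.fun_mul hf₂), pd_mul hf₁ hg₂, pd_mul hg₁ hf₂]
  ext y
  ring

lemma lapX_sq (hf : ContDiff ℝ 2 f) (y : En n) :
    lapX (fun y ↦ f y ^ 2) y = 2 * f y * lapX f y + 2 * ∑ i, pd i f y ^ 2 := by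
  simp_rw [pow_two, lapX, pd_pd_mul hf hf, Finset.mul_sum, ← Finset.sum_add_distrib]
  exact Finset.sum_congr rfl fun i _ ↦ by ring

lemma lapX_sub_const (f : En n → ℝ) (c : ℝ) : lapX (fun y ↦ f y - c) = lapX f := by
  ext y
  simp only [lapX, pd_sub_const]

end PartialDerivatives

section BoundedContinuous

variable {X : Type*} [TopologicalSpace X] {f g : X → ℝ}

/-- Bounded continuous real functions, as a predicate on unbundled functions. -/
def IsBddCont (f : X → ℝ) : Prop := ∃ F : BoundedContinuousFunction X ℝ, ⇑F = f

namespace IsBddCont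

lemma of_abs_le (hf : Continuous f) {M : ℝ} (hM : ∀ x, |f x| ≤ M) : IsBddCont f :=
  ⟨.ofNormedAddCommGroup f hf M hM, rfl⟩

lemma continuous : IsBddCont f → Continuous f := by
  rintro ⟨F, rfl⟩
  exact F.continuous

lemma exists_abs_le : IsBddCont f → ∃ M, 0 ≤ M ∧ ∀ x, |f x| ≤ M := by
  rintro ⟨F, rfl⟩
  exact ⟨‖F‖, norm_nonneg F, F.norm_coe_le_norm⟩

lemma const (c : ℝ) : IsBddCont fun _ : X ↦ c := ⟨.const X c, rfl⟩

lemma add : IsBddCont f → IsBddCont g → IsBddCont fun x ↦ f x + g x := by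
  rintro ⟨F, rfl⟩ ⟨G, rfl⟩
  exact ⟨F + G, rfl⟩

lemma sub : IsBddCont f → IsBddCont g → IsBddCont fun x ↦ f x - g x := by
  rintro ⟨F, rfl⟩ ⟨G, rfl⟩
  exact ⟨F - G, rfl⟩

lemma mul : IsBddCont f → IsBddCont g → IsBddCont fun x ↦ f x * g x := by
  rintro ⟨F, rfl⟩ ⟨G, rfl⟩
  exact ⟨F * G, rfl⟩

lemma sq : IsBddCont f → IsBddCont fun x ↦ f x ^ 2 := by
  rintro ⟨F, rfl⟩
  exact ⟨F ^ 2, rfl⟩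

lemma sum {ι : Type*} {t : Finset ι} {f : ι → X → ℝ} (hf : ∀ i, IsBddCont (f i)) :
    IsBddCont fun x ↦ ∑ i ∈ t, f i x := by
  choose F hF using hf
  exact ⟨∑ i ∈ t, F i, by ext x; simp [← hF]⟩

lemma integrable_mul [MeasurableSpace X] [OpensMeasurableSpace X] {μ : Measure X} {k : X → ℝ}
    (hf : IsBddCont f) (hk : Integrable k μ) : Integrable (fun x ↦ k x * f x) μ := by
  obtain ⟨M, -, hM⟩ := hf.exists_abs_le
  exact hk.mul_bdd hf.continuous.aestronglyMeasurable (ae_of_all _ hM)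

end IsBddCont

/-- Functions for which `∂ᵢ²` may be integrated by parts against an integrable kernel. -/
structure IsBddC2 {n : ℕ} (f : En n → ℝ) : Prop where
  contDiff : ContDiff ℝ 2 f
  isBddCont : IsBddCont f
  pderiv : ∀ i, IsBddCont (pd i f)
  pderiv_pderiv : ∀ i, IsBddCont (pd i (pd i f))

namespace IsBddC2

variable {n : ℕ} {f g : En n → ℝ}

lemma laplacian (hf : IsBddC2 f) : IsBddCont (lapX f) := .sum hf.pderiv_pderiv

lemma sub_const (hf : IsBddC2 f) (c : ℝ) : IsBddC2 fun y ↦ f y - c where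
  contDiff := hf.contDiff.sub contDiff_const
  isBddCont := hf.isBddCont.sub (.const c)
  pderiv i := by simpa only [pd_sub_const] using hf.pderiv i
  pderiv_pderiv i := by simpa only [pd_sub_const] using hf.pderiv_pderiv i

lemma sq (hf : IsBddC2 f) : IsBddC2 fun y ↦ f y ^ 2 where
  contDiff := hf.contDiff.pow 2
  isBddCont := hf.isBddCont.sq
  pderiv i := by
    have hf₁ := hf.contDiff.differentiable two_ne_zero
    simp only [pow_two, pd_mul hf₁ hf₁]
    exact (hf.isBddCont.mul (hf.pderiv i)).add (hf.isBddCont.mul (hf.pderiv i))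
  pderiv_pderiv i := by
    simp only [pow_two, pd_pd_mul hf.contDiff hf.contDiff]
    have h := hf.isBddCont.mul (hf.pderiv_pderiv i)
    exact (h.add ((IsBddCont.const 2).mul ((hf.pderiv i).mul (hf.pderiv i)))).add h

end IsBddC2

end BoundedContinuous

section IntegrationByParts

variable {n : ℕ} {f g : En n → ℝ}

lemma integral_mul_pd_pd (hf : ContDiff ℝ 2 f) (hg : IsBddC2 g) {i : Fin n} (hf₀ : Integrable f)
    (hf₁ : Integrable (pd i f)) (hf₂ : Integrable (pd i (pd i f))) :
    ∫ y, f y * pd i (pd i g) y = ∫ y, pd i (pd i f) y * g y :=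
  calc ∫ y, f y * pd i (pd i g) y = -∫ y, pd i f y * pd i g y :=
        integral_mul_fderiv_eq_neg_fderiv_mul_of_integrable ((hg.pderiv i).integrable_mul hf₁)
          ((hg.pderiv_pderiv i).integrable_mul hf₀) ((hg.pderiv i).integrable_mul hf₀)
          (fun y _ ↦ hf.differentiable two_ne_zero y) fun y _ ↦ differentiable_pd hg.contDiff i y
    _ = ∫ y, pd i (pd i f) y * g y := by
        rw [← neg_neg (∫ y, pd i (pd i f) y * g y)]
        exact congrArg _ (integral_mul_fderiv_eq_neg_fderiv_mul_of_integrable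
          (hg.isBddCont.integrable_mul hf₂) ((hg.pderiv i).integrable_mul hf₁)
          (hg.isBddCont.integrable_mul hf₁) (fun y _ ↦ differentiable_pd hf i y)
          fun y _ ↦ hg.contDiff.differentiable two_ne_zero y)

lemma integral_mul_lapX (hf : ContDiff ℝ 2 f) (hg : IsBddC2 g) (hf₀ : Integrable f)
    (hf₁ : ∀ i, Integrable (pd i f)) (hf₂ : ∀ i, Integrable (pd i (pd i f))) :
    ∫ y, f y * lapX g y = ∫ y, lapX f y * g y := by
  simp_rw [lapX, Finset.mul_sum, Finset.sum_mul]
  rw [integral_finsetSum _ fun i _ ↦ (hg.pderiv_pderiv i).integrable_mul hf₀,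
    integral_finsetSum _ fun i _ ↦ hg.isBddCont.integrable_mul (hf₂ i)]
  exact Finset.sum_congr rfl fun i _ ↦ integral_mul_pd_pd hf hg hf₀ (hf₁ i) (hf₂ i)

end IntegrationByParts

section TestFunctions

variable {E F : Type*} [NormedAddCommGroup E] [NormedSpace ℝ E] [NormedAddCommGroup F]
  [NormedSpace ℝ F] {v w : E → F}

/-- Test functions: smooth with compact support. -/
structure IsTestFun (v : E → F) : Prop where
  contDiff : ContDiff ℝ ∞ v
  hasCompactSupport : HasCompactSupport v

namespace IsTestFun

lemma continuous (hv : IsTestFun v) : Continuous v := hv.contDiff.continuous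

lemma differentiable (hv : IsTestFun v) : Differentiable ℝ v := hv.contDiff.differentiable (by simp)

lemma fderiv (hv : IsTestFun v) : IsTestFun (fderiv ℝ v) where
  contDiff := hv.contDiff.fderiv_right (by simp)
  hasCompactSupport := hv.hasCompactSupport.fderiv ℝ

lemma add (hv : IsTestFun v) (hw : IsTestFun w) : IsTestFun fun x ↦ v x + w x where
  contDiff := hv.contDiff.add hw.contDiff
  hasCompactSupport := hv.hasCompactSupport.add hw.hasCompactSupport

lemma sum {ι : Type*} {t : Finset ι} {v : ι → E → F} (hv : ∀ i ∈ t, IsTestFun (v i)) :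
    IsTestFun fun x ↦ ∑ i ∈ t, v i x := by
  simp_rw [← Finset.sum_apply]
  exact Finset.sum_induction v IsTestFun (fun _ _ ↦ add) ⟨contDiff_const, .zero⟩ hv

lemma mul {v w : E → ℝ} (hv : IsTestFun v) (hw : IsTestFun w) : IsTestFun fun x ↦ v x * w x where
  contDiff := hv.contDiff.mul hw.contDiff
  hasCompactSupport := hv.hasCompactSupport.mul_right

lemma exists_norm_le (hv : IsTestFun v) : ∃ M, 0 ≤ M ∧ ∀ x, ‖v x‖ ≤ M := by
  obtain ⟨M, hM⟩ := hv.hasCompactSupport.exists_bound_of_continuous hv.continuous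
  exact ⟨M, (norm_nonneg _).trans (hM 0), hM⟩

lemma isBddCont {v : E → ℝ} (hv : IsTestFun v) : IsBddCont v :=
  let ⟨_, _, hM⟩ := hv.exists_norm_le
  .of_abs_le hv.continuous hM

lemma exists_holderWith (hv : IsTestFun v) {θ : ℝ≥0} (hθ : θ ≤ 1) : ∃ L, HolderWith L θ v := by
  obtain ⟨K, hK⟩ :=
    ContDiff.lipschitzWith_of_hasCompactSupport hv.hasCompactSupport hv.contDiff (by simp)
  obtain ⟨M, hM₀, hM⟩ := hv.exists_norm_le
  have hzero : HolderWith (2 * M.toNNReal) 0 v := fun x y ↦ by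
    rw [NNReal.coe_zero, ENNReal.rpow_zero, mul_one, edist_dist, ENNReal.ofReal,
      ENNReal.coe_le_coe, Real.toNNReal_le_iff_le_coe, dist_eq_norm]
    push_cast
    rw [Real.coe_toNNReal _ hM₀, two_mul]
    exact (norm_sub_le _ _).trans (add_le_add (hM x) (hM y))
  exact ⟨_, hzero.of_le_of_le (holderWith_one.2 hK) zero_le hθ⟩

end IsTestFun

namespace IsTestFun

variable {n : ℕ} {v : En n → ℝ}

lemma pderiv (hv : IsTestFun v) (i : Fin n) : IsTestFun (pd i v) where
  contDiff := contDiff_pd hv.contDiff (by simp) i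
  hasCompactSupport := hv.fderiv.hasCompactSupport.comp_left
    (g := fun L : En n →L[ℝ] ℝ ↦ L (EuclideanSpace.single i 1)) rfl

lemma laplacian (hv : IsTestFun v) : IsTestFun (lapX v) :=
  .sum fun i _ ↦ (hv.pderiv i).pderiv i

lemma isBddC2 (hv : IsTestFun v) : IsBddC2 v where
  contDiff := contDiff_infty.1 hv.contDiff 2
  isBddCont := hv.isBddCont
  pderiv i := (hv.pderiv i).isBddCont
  pderiv_pderiv i := ((hv.pderiv i).pderiv i).isBddCont

end IsTestFun

end TestFunctions

section RadialPowEuclidean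

variable {n : ℕ} {b z : ℝ}

lemma contDiff_radialPow (hz : 0 < z) {k : WithTop ℕ∞} :
    ContDiff ℝ k (radialPow b z : En n → ℝ) :=
  ((contDiff_norm_sq ℝ).add contDiff_const).rpow_const_of_ne fun w ↦ by positivity

lemma pd_radialPow (hz : 0 < z) (i : Fin n) :
    pd i (radialPow b z) = fun w ↦ -b * (radialPow (b + 2) z w * w i) := by
  ext w
  rw [pd, (hasFDerivAt_radialPow hz w).fderiv]
  simp [EuclideanSpace.inner_single_right, mul_assoc]

lemma pd_coord (i : Fin n) : pd i (fun w : En n ↦ w i) = 1 := by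
  ext w
  have h : HasFDerivAt (fun w : En n ↦ w i) (EuclideanSpace.proj i : En n →L[ℝ] ℝ) w :=
    (EuclideanSpace.proj i : En n →L[ℝ] ℝ).hasFDerivAt
  simp [pd, h.fderiv]

lemma pd_pd_radialPow (hz : 0 < z) (i : Fin n) :
    pd i (pd i (radialPow b z)) = fun w ↦
      b * ((b + 2) * (radialPow (b + 4) z w * w i ^ 2) - radialPow (b + 2) z w) := by
  have hrad : Differentiable ℝ (radialPow (b + 2) z : En n → ℝ) :=
    (contDiff_radialPow hz).differentiable one_ne_zero
  have hcoord : Differentiable ℝ fun w : En n ↦ w i := by fun_prop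
  rw [pd_radialPow hz, pd_const_mul (hrad.fun_mul hcoord), pd_mul hrad hcoord, pd_coord,
    pd_radialPow hz, show b + 2 + 2 = b + 4 by ring]
  ext w
  simp only [Pi.one_apply]
  ring

lemma lapX_radialPow (hz : 0 < z) (w : En n) :
    lapX (radialPow b z) w =
      b * ((b + 2 - n) * radialPow (b + 2) z w - (b + 2) * z ^ 2 * radialPow (b + 4) z w) := by
  have hsum : ∑ i, radialPow (b + 4) z w * w i ^ 2 =
      radialPow (b + 2) z w - z ^ 2 * radialPow (b + 4) z w := by
    rw [← Finset.mul_sum, ← EuclideanSpace.real_norm_sq_eq, mul_comm,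
      show b + 4 = b + 2 + 2 by ring, norm_sq_mul_radialPow_add_two hz]
  simp only [lapX, pd_pd_radialPow hz, ← Finset.mul_sum, Finset.sum_sub_distrib, hsum,
    Finset.sum_const, Finset.card_univ, Fintype.card_fin, nsmul_eq_mul]
  ring

lemma integrable_radialPow_euclidean (hz : 0 < z) (hb : n < b) :
    Integrable (radialPow b z : En n → ℝ) :=
  integrable_radialPow hz (by simpa using hb)

lemma integrable_radialPow_mul_coord_pow (hz : 0 < z) {k : ℕ} (hb : n + k < b) (i : Fin n) :
    Integrable fun w : En n ↦ radialPow b z w * w i ^ k := by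
  have hint : Integrable (radialPow (b + -k) z : En n → ℝ) :=
    integrable_radialPow_euclidean hz (by linarith)
  refine hint.mono' ((continuous_radialPow hz).mul (by fun_prop)).aestronglyMeasurable
    (ae_of_all _ fun w ↦ ?_)
  rw [← radialPow_mul_radialPow hz, norm_mul, norm_pow,
    Real.norm_of_nonneg (radialPow_pos hz w).le]
  gcongr
  · exact (radialPow_pos hz w).le
  · calc ‖w i‖ ^ k ≤ ‖w‖ ^ (k : ℝ) := by
          rw [Real.rpow_natCast]
          exact pow_le_pow_left₀ (norm_nonneg _) (PiLp.norm_apply_le w i) k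
      _ ≤ radialPow (-k) z w := norm_rpow_le_radialPow_neg k.cast_nonneg w

lemma integrable_pd_radialPow (hz : 0 < z) (hb : n < b) (i : Fin n) :
    Integrable (pd i (radialPow b z : En n → ℝ)) := by
  rw [pd_radialPow hz]
  simpa only [pow_one] using
    (integrable_radialPow_mul_coord_pow (k := 1) hz (by push_cast; linarith) i).const_mul (-b)

lemma integrable_pd_pd_radialPow (hz : 0 < z) (hb : n < b) (i : Fin n) :
    Integrable (pd i (pd i (radialPow b z : En n → ℝ))) := by
  rw [pd_pd_radialPow hz]
  exact (((integrable_radialPow_mul_coord_pow hz (by push_cast; linarith) i).const_mul _).sub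
    (integrable_radialPow_euclidean hz (by linarith))).const_mul b

end RadialPowEuclidean

section PoissonKernel

variable {n : ℕ} {s z : ℝ}

lemma pns_pos (hs : 0 < s) : 0 < pns n s := by
  have := Real.Gamma_pos_of_pos hs
  have : 0 < Real.Gamma ((n : ℝ) / 2 + s) := Real.Gamma_pos_of_pos (by positivity)
  unfold pns
  positivity

lemma Pker_eq_radialPow (n : ℕ) (s z : ℝ) :
    Pker n s z = fun w ↦ pns n s * z ^ (2 * s) * radialPow (n + 2 * s) z w := rfl

lemma Pker_nonneg (hs : 0 < s) (hz : 0 < z) (w : En n) : 0 ≤ Pker n s z w := by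
  have h₁ := pns_pos (n := n) hs
  have h₂ := radialPow_pos (b := n + 2 * s) hz w
  rw [Pker_eq_radialPow]
  positivity

lemma contDiff_Pker (hz : 0 < z) {k : WithTop ℕ∞} : ContDiff ℝ k (Pker n s z) :=
  contDiff_const.mul (contDiff_radialPow hz)

lemma continuous_Pker (hz : 0 < z) : Continuous (Pker n s z) :=
  (contDiff_Pker hz (k := 0)).continuous

lemma integrable_Pker (hs : 0 < s) (hz : 0 < z) : Integrable (Pker n s z) :=
  (integrable_radialPow_euclidean hz (by linarith)).const_mul _

lemma integral_Pker (hs : 0 < s) (hz : 0 < z) : ∫ w, Pker n s z w = 1 := by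
  have hΓ := Gamma_mul_integral_radialPow (E := En n) (b := n / 2 + s) (by simpa using hs)
  rw [finrank_euclideanSpace_fin, add_sub_cancel_left, mul_add,
    mul_div_cancel₀ _ two_ne_zero] at hΓ
  have hzpow : z ^ (2 * s) * z ^ ((n : ℝ) - (n + 2 * s)) = 1 := by
    rw [← Real.rpow_add hz]
    simp
  have := Real.Gamma_pos_of_pos hs
  rw [Pker_eq_radialPow, integral_const_mul, integral_radialPow hz, finrank_euclideanSpace_fin,
    mul_assoc, ← mul_assoc (z ^ _), hzpow, one_mul, pns, div_mul_eq_mul_div, hΓ,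
    div_self (by positivity)]

lemma lapX_Pker (hz : 0 < z) (w : En n) :
    lapX (Pker n s z) w = pns n s * z ^ (2 * s) * ((n + 2 * s) *
      ((2 * s + 2) * radialPow (n + 2 * s + 2) z w
        - (n + 2 * s + 2) * z ^ 2 * radialPow (n + 2 * s + 2 + 2) z w)) := by
  rw [Pker_eq_radialPow, lapX_const_mul (contDiff_radialPow hz), lapX_radialPow hz,
    show (n : ℝ) + 2 * s + 2 + 2 = n + 2 * s + 4 by ring]
  ring

lemma continuous_lapX_Pker (hz : 0 < z) : Continuous (lapX (Pker n s z)) :=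
  continuous_finsetSum _ fun i _ ↦ continuous_pd_pd (contDiff_Pker hz) i

lemma integral_Pker_mul_lapX (hs : 0 < s) (hz : 0 < z) {g : En n → ℝ} (hg : IsBddC2 g)
    (x : En n) :
    ∫ y, Pker n s z (x - y) * lapX g y = ∫ y, lapX (Pker n s z) (x - y) * g y := by
  have hdec : (n : ℝ) < n + 2 * s := by linarith
  have hrad := contDiff_radialPow (n := n) (b := n + 2 * s) hz (k := 2)
  have hP : ContDiff ℝ 2 (Pker n s z) := contDiff_Pker hz
  have hpd (i : Fin n) : Integrable (pd i (Pker n s z)) := by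
    rw [Pker_eq_radialPow, pd_const_mul (hrad.differentiable two_ne_zero)]
    exact (integrable_pd_radialPow hz hdec i).const_mul _
  have hpd_pd (i : Fin n) : Integrable (pd i (pd i (Pker n s z))) := by
    rw [Pker_eq_radialPow, pd_const_mul (hrad.differentiable two_ne_zero),
      pd_const_mul (differentiable_pd hrad i)]
    exact (integrable_pd_pd_radialPow hz hdec i).const_mul _
  have hPx : ContDiff ℝ 2 fun y ↦ Pker n s z (x - y) := hP.comp (by fun_prop)
  rw [integral_mul_lapX hPx hg ((integrable_Pker hs hz).comp_sub_left x)]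
  · simp only [lapX_sub_left hP]
  · intro i
    rw [pd_sub_left (hP.differentiable two_ne_zero)]
    exact ((hpd i).comp_sub_left x).neg
  · intro i
    rw [pd_pd_sub_left hP]
    exact (hpd_pd i).comp_sub_left x

end PoissonKernel

section ConormalKernel

variable {n : ℕ} {s z : ℝ}

/-- The conormal derivative `z^(1-2s) ∂_z P_z^{(s)}` of the Poisson kernel. -/
def PkerConormal (n : ℕ) (s z : ℝ) (w : En n) : ℝ :=
  pns n s * (2 * s * radialPow (n + 2 * s) z w
    - (n + 2 * s) * z ^ 2 * radialPow (n + 2 * s + 2) z w)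

lemma continuous_PkerConormal (hz : 0 < z) : Continuous (PkerConormal n s z) :=
  continuous_const.mul ((continuous_const.mul (continuous_radialPow hz)).sub
    (continuous_const.mul (continuous_radialPow hz)))

lemma hasDerivAt_Pker (hz : 0 < z) (w : En n) :
    HasDerivAt (fun t ↦ Pker n s t w) (z ^ (2 * s - 1) * PkerConormal n s z w) z := by
  have hrpow : HasDerivAt (fun t : ℝ ↦ t ^ (2 * s)) (2 * s * z ^ (2 * s - 1)) z :=
    Real.hasDerivAt_rpow_const (Or.inl hz.ne')
  refine ((hrpow.const_mul (pns n s)).mul (hasDerivAt_radialPow hz w)).congr_deriv ?_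
  rw [PkerConormal, show z ^ (2 * s) = z ^ (2 * s - 1) * z by
    rw [← Real.rpow_add_one hz.ne', sub_add_cancel]]
  ring

lemma hasDerivAt_PkerConormal (hz : 0 < z) (w : En n) :
    HasDerivAt (fun t ↦ PkerConormal n s t w) (-(z ^ (1 - 2 * s) * lapX (Pker n s z) w)) z := by
  have hsq : HasDerivAt (fun t : ℝ ↦ t ^ 2) (2 * z) z := by simpa using hasDerivAt_pow 2 z
  refine ((((hasDerivAt_radialPow (b := n + 2 * s) hz w).const_mul (2 * s)).sub
    ((hsq.const_mul ((n : ℝ) + 2 * s)).mul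
      (hasDerivAt_radialPow (b := n + 2 * s + 2) hz w))).const_mul (pns n s)).congr_deriv ?_
  have hcancel : z ^ (1 - 2 * s) * z ^ (2 * s) = z := by
    rw [← Real.rpow_add hz, sub_add_cancel, Real.rpow_one]
  rw [lapX_Pker hz, mul_assoc (pns n s), mul_left_comm (z ^ (1 - 2 * s)),
    ← mul_assoc (z ^ (1 - 2 * s)), hcancel]
  ring

lemma abs_radialPow_combination_le {b : ℝ} (a c : ℝ) (hz : 0 < z) (w : En n) :
    |a * radialPow b z w - c * z ^ 2 * radialPow (b + 2) z w| ≤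
      (|a| + |c|) * radialPow b z w := by
  have hpos := radialPow_pos (b := b + 2) hz w
  have hle : z ^ 2 * radialPow (b + 2) z w ≤ radialPow b z w := by
    have h := norm_sq_mul_radialPow_add_two (b := b) hz w
    have : 0 ≤ ‖w‖ ^ 2 * radialPow (b + 2) z w := by positivity
    linarith
  calc _ ≤ |a * radialPow b z w| + |c * z ^ 2 * radialPow (b + 2) z w| := abs_sub _ _
    _ = |a| * radialPow b z w + |c| * (z ^ 2 * radialPow (b + 2) z w) := by
        rw [abs_mul, mul_assoc c, abs_mul, abs_of_pos (radialPow_pos hz w),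
          abs_of_nonneg (a := z ^ 2 * _) (by positivity)]
    _ ≤ |a| * radialPow b z w + |c| * radialPow b z w := by gcongr
    _ = _ := by ring

lemma exists_abs_PkerConormal_le (n : ℕ) (s : ℝ) :
    ∃ C, 0 ≤ C ∧ ∀ z, 0 < z → ∀ w : En n,
      |PkerConormal n s z w| ≤ C * radialPow (n + 2 * s) z w := by
  refine ⟨|pns n s| * (|2 * s| + |n + 2 * s|), by positivity, fun z hz w ↦ ?_⟩
  rw [PkerConormal, abs_mul, mul_assoc |pns n s|]
  exact mul_le_mul_of_nonneg_left (abs_radialPow_combination_le _ _ hz w) (abs_nonneg _)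

lemma exists_abs_lapX_Pker_le (n : ℕ) (s : ℝ) :
    ∃ C, 0 ≤ C ∧ ∀ z, 0 < z → ∀ w : En n,
      |lapX (Pker n s z) w| ≤ C * z ^ (2 * s) * radialPow (n + 2 * s + 2) z w := by
  refine ⟨|pns n s| * |n + 2 * s| * (|2 * s + 2| + |n + 2 * s + 2|), by positivity,
    fun z hz w ↦ ?_⟩
  rw [lapX_Pker hz, abs_mul, abs_mul, abs_mul, abs_of_pos (Real.rpow_pos_of_pos hz _)]
  calc _ ≤ |pns n s| * z ^ (2 * s) * (|n + 2 * s| *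
        ((|2 * s + 2| + |n + 2 * s + 2|) * radialPow (n + 2 * s + 2) z w)) := by
        gcongr
        exact abs_radialPow_combination_le _ _ hz w
    _ = _ := by ring

lemma integrable_PkerConormal (hs : 0 < s) (hz : 0 < z) : Integrable (PkerConormal n s z) :=
  (((integrable_radialPow_euclidean hz (by linarith)).const_mul _).sub
    ((integrable_radialPow_euclidean hz (by linarith)).const_mul _)).const_mul _

lemma integrable_lapX_Pker (hs : 0 < s) (hz : 0 < z) : Integrable (lapX (Pker n s z)) := by
  obtain ⟨C, -, hC⟩ := exists_abs_lapX_Pker_le n s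
  exact ((integrable_radialPow_euclidean hz (by linarith)).const_mul _).mono'
    (continuous_lapX_Pker hz).aestronglyMeasurable (ae_of_all _ (hC z hz))

end ConormalKernel

section VerticalDerivative

variable {n : ℕ} {s z : ℝ} {g : En n → ℝ}

lemma hasDerivAt_integral_of_abs_le_radialPow {F F' : ℝ → En n → ℝ} {C : ℝ → ℝ} {b : ℝ} (x : En n)
    (hb : n < b) (hF : ∀ z, 0 < z → Integrable (F z)) (hF' : ∀ z, 0 < z → Continuous (F' z))
    (hderiv : ∀ z, 0 < z → ∀ y, HasDerivAt (fun t ↦ F t y) (F' z y) z)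
    (hbound : ∀ z, 0 < z → ∀ y, |F' z y| ≤ C z * radialPow b z (x - y))
    (hC : ContinuousOn C (Ioi 0)) (hz : 0 < z) :
    HasDerivAt (fun t ↦ ∫ y, F t y) (∫ y, F' z y) z := by
  have hpos {t : ℝ} (ht : t ∈ Icc (z / 2) (2 * z)) : 0 < t := by linarith [ht.1]
  obtain ⟨M, hM⟩ := isCompact_Icc.exists_bound_of_continuousOn (hC.mono fun t ht ↦ hpos ht)
  have hnhds : Icc (z / 2) (2 * z) ∈ 𝓝 z := Icc_mem_nhds (by linarith) (by linarith)
  refine (hasDerivAt_integral_of_dominated_loc_of_deriv_le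
    (bound := fun y ↦ M * radialPow b (z / 2) (x - y)) hnhds ?_ (hF z hz)
    (hF' z hz).aestronglyMeasurable (ae_of_all _ fun y t ht ↦ ?_) ?_
    (ae_of_all _ fun y t ht ↦ hderiv t (hpos ht) y)).2
  · filter_upwards [hnhds] with t ht
    exact (hF t (hpos ht)).aestronglyMeasurable
  · have hrad := (radialPow_pos (b := b) (hpos ht) (x - y)).le
    calc ‖F' t y‖ ≤ C t * radialPow b t (x - y) := hbound t (hpos ht) y
      _ ≤ ‖C t‖ * radialPow b t (x - y) := by gcongr; exact le_abs_self _
      _ ≤ M * radialPow b (z / 2) (x - y) :=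
        mul_le_mul (hM t ht)
          (radialPow_anti (by linarith) ht.1 (by linarith [n.cast_nonneg (α := ℝ)]) _)
          hrad ((norm_nonneg _).trans (hM t ht))
  · exact ((integrable_radialPow_euclidean (by linarith) hb).comp_sub_left x).const_mul M

lemma hasDerivAt_integral_Pker_mul (hs : 0 < s) (hg : IsBddCont g) (x : En n) (hz : 0 < z) :
    HasDerivAt (fun t ↦ ∫ y, Pker n s t (x - y) * g y)
      (z ^ (2 * s - 1) * ∫ y, PkerConormal n s z (x - y) * g y) z := by
  obtain ⟨C, _, hC⟩ := exists_abs_PkerConormal_le n s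
  obtain ⟨M, _, hM⟩ := hg.exists_abs_le
  have hcont := hg.continuous
  rw [← integral_const_mul]
  refine hasDerivAt_integral_of_abs_le_radialPow (b := n + 2 * s)
    (F' := fun t y ↦ t ^ (2 * s - 1) * (PkerConormal n s t (x - y) * g y))
    (C := fun t ↦ t ^ (2 * s - 1) * (C * M)) x (by linarith)
    (fun t ht ↦ hg.integrable_mul ((integrable_Pker hs ht).comp_sub_left x)) (fun t ht ↦ ?_)
    (fun t ht y ↦ ?_) (fun t ht y ↦ ?_) ?_ hz
  · have := continuous_PkerConormal (n := n) (s := s) ht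
    fun_prop
  · rw [← mul_assoc]
    exact (hasDerivAt_Pker ht _).mul_const _
  · have h₁ := mul_le_mul (hC t ht (x - y)) (hM y) (abs_nonneg _) ((abs_nonneg _).trans (hC t ht _))
    rw [abs_mul, abs_mul, abs_of_pos (Real.rpow_pos_of_pos ht _)]
    exact (mul_le_mul_of_nonneg_left h₁ (by positivity)).trans_eq (by ring)
  · exact (continuousOn_id.rpow_const fun t ht ↦ Or.inl (ne_of_gt ht)).mul continuousOn_const

lemma hasDerivAt_integral_PkerConormal_mul (hs : 0 < s) (hg : IsBddCont g) (x : En n)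
    (hz : 0 < z) :
    HasDerivAt (fun t ↦ ∫ y, PkerConormal n s t (x - y) * g y)
      (-(z ^ (1 - 2 * s) * ∫ y, lapX (Pker n s z) (x - y) * g y)) z := by
  obtain ⟨C, _, hC⟩ := exists_abs_lapX_Pker_le n s
  obtain ⟨M, _, hM⟩ := hg.exists_abs_le
  have hcont := hg.continuous
  rw [← integral_const_mul, ← integral_neg]
  refine hasDerivAt_integral_of_abs_le_radialPow (b := n + 2 * s + 2)
    (F' := fun t y ↦ -(t ^ (1 - 2 * s) * (lapX (Pker n s t) (x - y) * g y)))
    (C := fun t ↦ t ^ (1 - 2 * s) * t ^ (2 * s) * (C * M)) x (by linarith)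
    (fun t ht ↦ hg.integrable_mul ((integrable_PkerConormal hs ht).comp_sub_left x))
    (fun t ht ↦ ?_) (fun t ht y ↦ ?_) (fun t ht y ↦ ?_) ?_ hz
  · have := continuous_lapX_Pker (n := n) (s := s) ht
    fun_prop
  · rw [← mul_assoc, ← neg_mul]
    exact (hasDerivAt_PkerConormal ht _).mul_const _
  · have h₁ := mul_le_mul (hC t ht (x - y)) (hM y) (abs_nonneg _) ((abs_nonneg _).trans (hC t ht _))
    rw [abs_neg, abs_mul, abs_mul, abs_of_pos (Real.rpow_pos_of_pos ht _)]
    exact (mul_le_mul_of_nonneg_left h₁ (by positivity)).trans_eq (by ring)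
  · exact ((continuousOn_id.rpow_const fun t ht ↦ Or.inl (ne_of_gt ht)).mul
      (continuousOn_id.rpow_const fun t ht ↦ Or.inl (ne_of_gt ht))).mul continuousOn_const

lemma integral_PkerConormal (hs : 0 < s) (hz : 0 < z) : ∫ w, PkerConormal n s z w = 0 := by
  have hderiv := hasDerivAt_integral_Pker_mul (n := n) hs (.const 1) 0 hz
  simp only [mul_one, integral_sub_left_eq_self] at hderiv
  have hconst : HasDerivAt (fun t ↦ ∫ w : En n, Pker n s t w) 0 z :=
    (hasDerivAt_const z 1).congr_of_eventuallyEq <|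
      (eventually_gt_nhds hz).mono fun t ht ↦ integral_Pker hs ht
  exact (mul_eq_zero.1 (hderiv.unique hconst)).resolve_left (Real.rpow_pos_of_pos hz _).ne'

end VerticalDerivative

section Convolution

open ContinuousLinearMap (mul)

variable {n : ℕ} {k v : En n → ℝ}

lemma integral_sub_mul_eq_convolution (k v : En n → ℝ) :
    (fun x ↦ ∫ y, k (x - y) * v y) = convolution k v (mul ℝ ℝ) volume :=
  funext fun _ ↦ convolution_mul_swap.symm

lemma contDiff_integral_sub_mul (hk : Continuous k) (hv : IsTestFun v) :
    ContDiff ℝ ∞ fun x ↦ ∫ y, k (x - y) * v y := by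
  rw [integral_sub_mul_eq_convolution]
  exact hv.hasCompactSupport.contDiff_convolution_right _ hk.locallyIntegrable hv.contDiff

lemma pd_integral_sub_mul (hk : Continuous k) (hv : IsTestFun v) (i : Fin n) :
    pd i (fun x ↦ ∫ y, k (x - y) * v y) = fun x ↦ ∫ y, k (x - y) * pd i v y := by
  rw [integral_sub_mul_eq_convolution, integral_sub_mul_eq_convolution]
  ext x
  have hderiv := hv.hasCompactSupport.hasFDerivAt_convolution_right (mul ℝ ℝ) (μ := volume)
    hk.locallyIntegrable (hv.contDiff.of_le (by simp)) x
  rw [pd, hderiv.fderiv, convolution_def, convolution_def, ContinuousLinearMap.integral_apply]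
  · rfl
  · exact hv.fderiv.hasCompactSupport.convolutionExists_right ((mul ℝ ℝ).precompR (En n))
      (μ := volume) hk.locallyIntegrable hv.fderiv.continuous x

end Convolution

section Extension

variable {n : ℕ} {s z : ℝ} {v : En n → ℝ}

/-- The conormal derivative `z^(1-2s) ∂_z V` of the Caffarelli–Silvestre extension `V` of `v`. -/
def CSextConormal (n : ℕ) (s : ℝ) (v : En n → ℝ) (y : En n) (z : ℝ) : ℝ :=
  ∫ w, PkerConormal n s z (y - w) * v w

lemma hasDerivAt_CSext (hs : 0 < s) (hv : IsTestFun v) (y : En n) (hz : 0 < z) :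
    HasDerivAt (CSext n s v y) (z ^ (2 * s - 1) * CSextConormal n s v y z) z :=
  hasDerivAt_integral_Pker_mul hs hv.isBddCont y hz

lemma hasDerivAt_CSextConormal (hs : 0 < s) (hv : IsTestFun v) (y : En n) (hz : 0 < z) :
    HasDerivAt (CSextConormal n s v y) (-(z ^ (1 - 2 * s) * CSext n s (lapX v) y z)) z := by
  rw [CSext, Pconv, integral_Pker_mul_lapX hs hz hv.isBddC2]
  exact hasDerivAt_integral_PkerConormal_mul hs hv.isBddCont y hz

lemma contDiff_CSext (hv : IsTestFun v) (hz : 0 < z) : ContDiff ℝ ∞ fun y ↦ CSext n s v y z :=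
  contDiff_integral_sub_mul (continuous_Pker hz) hv

lemma contDiff_CSextConormal (hv : IsTestFun v) (hz : 0 < z) :
    ContDiff ℝ ∞ fun y ↦ CSextConormal n s v y z :=
  contDiff_integral_sub_mul (continuous_PkerConormal hz) hv

lemma pd_CSext (hv : IsTestFun v) (hz : 0 < z) (i : Fin n) :
    pd i (fun y ↦ CSext n s v y z) = fun y ↦ CSext n s (pd i v) y z :=
  pd_integral_sub_mul (continuous_Pker hz) hv i

lemma pd_CSextConormal (hv : IsTestFun v) (hz : 0 < z) (i : Fin n) :
    pd i (fun y ↦ CSextConormal n s v y z) = fun y ↦ CSextConormal n s (pd i v) y z :=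
  pd_integral_sub_mul (continuous_PkerConormal hz) hv i

lemma lapX_CSext (hs : 0 < s) (hv : IsTestFun v) (hz : 0 < z) :
    lapX (fun y ↦ CSext n s v y z) = fun y ↦ CSext n s (lapX v) y z := by
  ext y
  simp only [lapX, pd_CSext hv hz, pd_CSext (hv.pderiv _) hz]
  simp only [CSext, Pconv, lapX, Finset.mul_sum]
  exact (integral_finsetSum _ fun i _ ↦ ((hv.pderiv i).pderiv i).isBddCont.integrable_mul
    ((integrable_Pker hs hz).comp_sub_left y)).symm

lemma abs_CSext_le (hs : 0 < s) (hz : 0 < z) {M : ℝ} (hM : ∀ y, |v y| ≤ M) (y : En n) :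
    |CSext n s v y z| ≤ M := by
  have hP := ((integrable_Pker hs hz).comp_sub_left y).mul_const M
  calc |CSext n s v y z| ≤ ∫ w, Pker n s z (y - w) * M := by
        rw [CSext, Pconv, ← Real.norm_eq_abs]
        refine norm_integral_le_of_norm_le hP (ae_of_all _ fun w ↦ ?_)
        rw [norm_mul, Real.norm_of_nonneg (Pker_nonneg hs hz _)]
        exact mul_le_mul_of_nonneg_left (hM w) (Pker_nonneg hs hz _)
    _ = M := by
        rw [integral_mul_const, integral_sub_left_eq_self (Pker n s z), integral_Pker hs hz,
          one_mul]

lemma isBddCont_CSext (hs : 0 < s) (hv : IsTestFun v) (hz : 0 < z) :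
    IsBddCont fun y ↦ CSext n s v y z :=
  let ⟨_, _, hM⟩ := hv.exists_norm_le
  .of_abs_le (contDiff_CSext hv hz).continuous (abs_CSext_le hs hz hM)

lemma isBddC2_CSext (hs : 0 < s) (hv : IsTestFun v) (hz : 0 < z) :
    IsBddC2 fun y ↦ CSext n s v y z where
  contDiff := contDiff_infty.1 (contDiff_CSext hv hz) 2
  isBddCont := isBddCont_CSext hs hv hz
  pderiv i := by simpa only [pd_CSext hv hz] using isBddCont_CSext hs (hv.pderiv i) hz
  pderiv_pderiv i := by
    simpa only [pd_CSext hv hz, pd_CSext (hv.pderiv i) hz] using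
      isBddCont_CSext hs ((hv.pderiv i).pderiv i) hz

lemma abs_integral_le_of_abs_le_radialPow {F : En n → ℝ} {b C : ℝ} {x : En n} (hb : n < b)
    (hz : 0 < z) (hF : ∀ y, |F y| ≤ C * radialPow b z (x - y)) :
    |∫ y, F y| ≤ C * (∫ w : En n, radialPow b 1 w) * z ^ (n - b) := by
  rw [← Real.norm_eq_abs]
  refine (norm_integral_le_of_norm_le
    (((integrable_radialPow_euclidean hz hb).comp_sub_left x).const_mul C)
    (ae_of_all _ hF)).trans_eq ?_
  rw [integral_const_mul, integral_sub_left_eq_self (radialPow b z), integral_radialPow hz,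
    finrank_euclideanSpace_fin]
  ring

section Holder

variable {θ L : ℝ≥0}

lemma abs_sub_le_of_holderWith (hv : HolderWith L θ v) (x y : En n) :
    |v y - v x| ≤ L * ‖x - y‖ ^ (θ : ℝ) := by
  simpa [dist_eq_norm, norm_sub_rev x y] using hv.dist_le y x

lemma abs_integral_mul_sub_le_of_holderWith {k : En n → ℝ} {b C : ℝ} (hz : 0 < z) (hC : 0 ≤ C)
    (hk : ∀ w, |k w| ≤ C * radialPow b z w) (hv : HolderWith L θ v) (hb : n + θ < b) (x : En n) :
    |∫ y, k (x - y) * (v y - v x)| ≤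
      C * L * (∫ w : En n, radialPow (b - θ) 1 w) * z ^ (n + θ - b) := by
  rw [← sub_sub_eq_add_sub]
  refine abs_integral_le_of_abs_le_radialPow (x := x) (by linarith) hz fun y ↦ ?_
  have hpow : ‖x - y‖ ^ (θ : ℝ) ≤ radialPow (-θ) z (x - y) := norm_rpow_le_radialPow_neg θ.2 _
  have hpos := (radialPow_pos (b := b) hz (x - y)).le
  calc |k (x - y) * (v y - v x)| = |k (x - y)| * |v y - v x| := abs_mul _ _
    _ ≤ C * radialPow b z (x - y) * (L * radialPow (-θ) z (x - y)) := by
        gcongr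
        · exact hk _
        · exact (abs_sub_le_of_holderWith hv x y).trans (by gcongr)
    _ = C * L * radialPow (b - θ) z (x - y) := by
        rw [sub_eq_add_neg b, ← radialPow_mul_radialPow hz]
        ring

lemma exists_abs_CSextConormal_le (hs : 0 < s) (hv : IsTestFun v) (hvL : HolderWith L θ v)
    (hθ : θ < 2 * s) :
    ∃ C, 0 ≤ C ∧ ∀ z, 0 < z → ∀ y : En n, |CSextConormal n s v y z| ≤ C * z ^ (θ - 2 * s) := by
  obtain ⟨C, hC₀, hC⟩ := exists_abs_PkerConormal_le n s
  refine ⟨C * L * ∫ w : En n, radialPow (n + 2 * s - θ) 1 w,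
    mul_nonneg (by positivity) (integral_nonneg fun w ↦ (radialPow_pos one_pos w).le),
    fun z hz y ↦ ?_⟩
  have hK := (integrable_PkerConormal (n := n) hs hz).comp_sub_left y
  have hcancel : CSextConormal n s v y z =
      ∫ w, PkerConormal n s z (y - w) * (v w - v y) := by
    simp_rw [mul_sub]
    rw [integral_sub (hv.isBddCont.integrable_mul hK) (hK.mul_const _), integral_mul_const,
      integral_sub_left_eq_self (PkerConormal n s z), integral_PkerConormal hs hz, zero_mul,
      sub_zero, CSextConormal]
  rw [hcancel]
  refine (abs_integral_mul_sub_le_of_holderWith hz hC₀ (hC z hz) hvL (by linarith) y).trans_eq ?_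
  rw [add_sub_add_left_eq_sub]

lemma exists_abs_CSext_sub_le (hs : 0 < s) (hv : IsTestFun v) (hvL : HolderWith L θ v)
    (hθ : θ < 2 * s) :
    ∃ C, 0 ≤ C ∧ ∀ z, 0 < z → ∀ x y : En n,
      |CSext n s v y z - v x| ≤ C * radialPow (-θ) z (x - y) := by
  set C := pns n s * L * ∫ w : En n, radialPow (n + 2 * s - θ) 1 w with hC
  have hC₀ : 0 ≤ C := mul_nonneg (mul_nonneg (pns_pos hs).le L.2)
    (integral_nonneg fun w ↦ (radialPow_pos one_pos w).le)
  refine ⟨C + L, by positivity, fun z hz x y ↦ ?_⟩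
  have hP := (integrable_Pker (n := n) hs hz).comp_sub_left y
  have hcancel : CSext n s v y z - v y = ∫ w, Pker n s z (y - w) * (v w - v y) := by
    simp_rw [mul_sub]
    rw [integral_sub (hv.isBddCont.integrable_mul hP) (hP.mul_const _), integral_mul_const,
      integral_sub_left_eq_self (Pker n s z), integral_Pker hs hz, one_mul, CSext, Pconv]
  have hPker (w : En n) :
      |Pker n s z w| ≤ pns n s * z ^ (2 * s) * radialPow (n + 2 * s) z w :=
    (abs_of_nonneg (Pker_nonneg hs hz w)).le
  have happrox : |CSext n s v y z - v y| ≤ C * z ^ (θ : ℝ) := by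
    rw [hcancel]
    refine (abs_integral_mul_sub_le_of_holderWith hz
      (mul_nonneg (pns_pos hs).le (Real.rpow_nonneg hz.le _)) hPker hvL (by linarith) y).trans_eq ?_
    rw [add_sub_add_left_eq_sub, hC, Real.rpow_sub hz]
    field_simp
  calc |CSext n s v y z - v x| ≤ |CSext n s v y z - v y| + |v y - v x| := abs_sub_le _ _ _
    _ ≤ C * z ^ (θ : ℝ) + L * ‖x - y‖ ^ (θ : ℝ) :=
        add_le_add happrox (abs_sub_le_of_holderWith hvL x y)
    _ ≤ C * radialPow (-θ) z (x - y) + L * radialPow (-θ) z (x - y) := by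
        gcongr
        · exact rpow_le_radialPow_neg θ.2 hz.le _
        · exact norm_rpow_le_radialPow_neg θ.2 _
    _ = (C + L) * radialPow (-θ) z (x - y) := by ring

end Holder

lemma exists_abs_CSext_sub_le_const (hs : 0 < s) (hv : IsTestFun v) :
    ∃ M, 0 ≤ M ∧ ∀ z, 0 < z → ∀ x y : En n, |CSext n s v y z - v x| ≤ M := by
  obtain ⟨M, hM₀, hM⟩ := hv.exists_norm_le
  exact ⟨M + M, by positivity, fun z hz x y ↦
    (abs_sub _ _).trans (add_le_add (abs_CSext_le hs hz hM y) (hM x))⟩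

lemma exists_abs_CSextConormal_le_const (hs : 0 < s) (hv : IsTestFun v) :
    ∃ C, 0 ≤ C ∧ ∀ z, 0 < z → ∀ y : En n, |CSextConormal n s v y z| ≤ C * z ^ (-(2 * s)) := by
  obtain ⟨L, hL⟩ := hv.exists_holderWith zero_le_one
  simpa only [NNReal.coe_zero, zero_sub] using
    exists_abs_CSextConormal_le hs hv hL (by simpa using hs)

lemma isBddCont_CSextConormal (hs : 0 < s) (hv : IsTestFun v) (hz : 0 < z) :
    IsBddCont fun y ↦ CSextConormal n s v y z :=
  let ⟨_, _, hC⟩ := exists_abs_CSextConormal_le_const hs hv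
  .of_abs_le (contDiff_CSextConormal hv hz).continuous (hC z hz)

end Extension

section SingularWeight

lemma integrable_norm_rpow_neg_mul_min_one {E : Type*} [NormedAddCommGroup E] [NormedSpace ℝ E]
    [FiniteDimensional ℝ E] [Nontrivial E] [MeasurableSpace E] [BorelSpace E] {μ : Measure E}
    [μ.IsAddHaarMeasure] {a p : ℝ} (ha : finrank ℝ E < a) (hap : a < finrank ℝ E + p) :
    Integrable (fun h : E ↦ ‖h‖ ^ (-a) * min 1 (‖h‖ ^ p)) μ := by
  set d := finrank ℝ E
  have hd : 1 ≤ d := Module.finrank_pos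
  refine (integrable_fun_norm_addHaar μ (f := fun r : ℝ ↦ r ^ (-a) * min 1 (r ^ p))).2 ?_
  have hmeas : Measurable fun r : ℝ ↦ r ^ (d - 1) • (r ^ (-a) * min 1 (r ^ p)) := by fun_prop
  have hradial {r c q : ℝ} (hr : 0 < r) (hc₀ : 0 ≤ c) (hc : c ≤ r ^ q) :
      ‖r ^ (d - 1) • (r ^ (-a) * c)‖ ≤ r ^ (d - 1 - a + q) := by
    rw [smul_eq_mul, Real.norm_of_nonneg (by positivity), ← Real.rpow_natCast, Nat.cast_sub hd,
      Nat.cast_one, sub_eq_add_neg _ a, Real.rpow_add hr, Real.rpow_add hr, ← mul_assoc]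
    gcongr
  rw [← Ioc_union_Ioi_eq_Ioi zero_le_one]
  refine IntegrableOn.union ?_ ?_
  · have hint : IntegrableOn (fun r : ℝ ↦ r ^ (d - 1 - a + p)) (Ioc 0 1) :=
      (intervalIntegrable_iff_integrableOn_Ioc_of_le zero_le_one).1
        (intervalIntegral.intervalIntegrable_rpow' (by linarith))
    refine hint.mono' hmeas.aestronglyMeasurable ?_
    filter_upwards [ae_restrict_mem measurableSet_Ioc] with r hr
    have := hr.1
    exact hradial hr.1 (by positivity) (min_le_right _ _)
  · have hint : IntegrableOn (fun r : ℝ ↦ r ^ (d - 1 - a + 0)) (Ioi 1) :=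
      integrableOn_Ioi_rpow_of_lt (by linarith) one_pos
    refine hint.mono' hmeas.aestronglyMeasurable ?_
    filter_upwards [ae_restrict_mem measurableSet_Ioi] with r hr
    have hr₀ : 0 < r := one_pos.trans hr
    exact hradial hr₀ (by positivity) ((min_le_left _ _).trans_eq (Real.rpow_zero r).symm)

end SingularWeight

section GreenFlux

variable {n : ℕ} {s z : ℝ} {v : En n → ℝ}

/-- Squared norm of the full gradient `(∇ₓ, ∂_z)` of the extension of `v`. -/
def energyDensity (n : ℕ) (s : ℝ) (v : En n → ℝ) (z : ℝ) (y : En n) : ℝ :=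
  (z ^ (2 * s - 1) * CSextConormal n s v y z) ^ 2 + ∑ j, CSext n s (pd j v) y z ^ 2

/-- With `W = V - v(x)` and `P` the Poisson kernel centred at `x`, the vertical flux
`z^{1-2s}(P ∂_z(W²) - W² ∂_z P)` of Green's identity for the pair `P`, `W²`. -/
def greenFlux (n : ℕ) (s : ℝ) (v : En n → ℝ) (x : En n) (z : ℝ) (y : En n) : ℝ :=
  2 * Pker n s z (x - y) * (CSext n s v y z - v x) * CSextConormal n s v y z
    - PkerConormal n s z (x - y) * (CSext n s v y z - v x) ^ 2

/-- The `z`-derivative of `greenFlux`, after the extension equation for `P` and `V` has replaced the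
second vertical derivatives by horizontal Laplacians. -/
def greenFluxDeriv (n : ℕ) (s : ℝ) (v : En n → ℝ) (x : En n) (z : ℝ) (y : En n) : ℝ :=
  z ^ (1 - 2 * s) * (Pker n s z (x - y) * (2 * ((z ^ (2 * s - 1) * CSextConormal n s v y z) ^ 2
      - (CSext n s v y z - v x) * CSext n s (lapX v) y z))
    + lapX (Pker n s z) (x - y) * (CSext n s v y z - v x) ^ 2)

lemma hasDerivAt_greenFlux (hs : 0 < s) (hv : IsTestFun v) (x y : En n) (hz : 0 < z) :
    HasDerivAt (fun t ↦ greenFlux n s v x t y) (greenFluxDeriv n s v x z y) z := by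
  have hP := hasDerivAt_Pker (n := n) (s := s) hz (x - y)
  have hK := hasDerivAt_PkerConormal (n := n) (s := s) hz (x - y)
  have hW := (hasDerivAt_CSext hs hv y hz).sub_const (v x)
  have hA := hasDerivAt_CSextConormal hs hv y hz
  have hcancel : z ^ (1 - 2 * s) * z ^ (2 * s - 1) = 1 := by rw [← Real.rpow_add hz]; simp
  refine ((((hP.const_mul 2).mul hW).mul hA).sub (hK.mul (hW.pow 2))).congr_deriv ?_
  simp only [greenFluxDeriv, Pi.mul_apply, Pi.pow_apply, Nat.cast_ofNat, Nat.add_one_sub_one,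
    pow_one]
  linear_combination (-2 * Pker n s z (x - y) * z ^ (2 * s - 1) * CSextConormal n s v y z ^ 2)
    * hcancel

lemma isBddCont_CSext_sub_const (hs : 0 < s) (hv : IsTestFun v) (c : ℝ) (hz : 0 < z) :
    IsBddCont fun y ↦ CSext n s v y z - c :=
  (isBddCont_CSext hs hv hz).sub (.const c)

lemma integrable_greenFlux_fst (hs : 0 < s) (hv : IsTestFun v) (x : En n) (hz : 0 < z) :
    Integrable fun y ↦
      2 * Pker n s z (x - y) * (CSext n s v y z - v x) * CSextConormal n s v y z := by
  simpa only [mul_assoc] using (((isBddCont_CSext_sub_const hs hv (v x) hz).mul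
    (isBddCont_CSextConormal hs hv hz)).integrable_mul
      ((integrable_Pker hs hz).comp_sub_left x)).const_mul 2

lemma integrable_greenFlux_snd (hs : 0 < s) (hv : IsTestFun v) (x : En n) (hz : 0 < z) :
    Integrable fun y ↦ PkerConormal n s z (x - y) * (CSext n s v y z - v x) ^ 2 :=
  (isBddCont_CSext_sub_const hs hv (v x) hz).sq.integrable_mul
    ((integrable_PkerConormal hs hz).comp_sub_left x)

lemma integrable_greenFlux (hs : 0 < s) (hv : IsTestFun v) (x : En n) (hz : 0 < z) :
    Integrable (greenFlux n s v x z) :=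
  (integrable_greenFlux_fst hs hv x hz).sub (integrable_greenFlux_snd hs hv x hz)

lemma continuous_greenFluxDeriv (hs : 0 < s) (hv : IsTestFun v) (x : En n) (hz : 0 < z) :
    Continuous (greenFluxDeriv n s v x z) := by
  have hP := continuous_Pker (n := n) (s := s) hz
  have hL := continuous_lapX_Pker (n := n) (s := s) hz
  have hV := (isBddCont_CSext hs hv hz).continuous
  have hVL := (isBddCont_CSext hs hv.laplacian hz).continuous
  have hA := (isBddCont_CSextConormal hs hv hz).continuous
  unfold greenFluxDeriv
  fun_prop

lemma exists_abs_greenFlux_le (hs : 0 < s) (hv : IsTestFun v) (x : En n) :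
    ∃ C, ∀ z, 0 < z → ∀ y, |greenFlux n s v x z y| ≤ C * radialPow (n + 2 * s) z (x - y) := by
  obtain ⟨M, hM₀, hM⟩ := exists_abs_CSext_sub_le_const hs hv
  obtain ⟨A, _, hA⟩ := exists_abs_CSextConormal_le_const hs hv
  obtain ⟨K, _, hK⟩ := exists_abs_PkerConormal_le n s
  refine ⟨2 * pns n s * M * A + K * M ^ 2, fun z hz y ↦ ?_⟩
  have hcancel : z ^ (2 * s) * z ^ (-(2 * s)) = 1 := by rw [← Real.rpow_add hz]; simp
  have hP := Pker_nonneg hs hz (x - y)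
  have hKn := (abs_nonneg _).trans (hK z hz (x - y))
  refine (abs_sub _ _).trans ?_
  simp only [abs_mul, abs_pow, abs_two, abs_of_nonneg hP]
  calc 2 * Pker n s z (x - y) * |CSext n s v y z - v x| * |CSextConormal n s v y z|
        + |PkerConormal n s z (x - y)| * |CSext n s v y z - v x| ^ 2
      ≤ 2 * Pker n s z (x - y) * M * (A * z ^ (-(2 * s)))
        + K * radialPow (n + 2 * s) z (x - y) * M ^ 2 := by
        gcongr
        exacts [hM z hz x y, hA z hz y, hK z hz _, hM z hz x y]
    _ = (2 * pns n s * M * A + K * M ^ 2) * radialPow (n + 2 * s) z (x - y) := by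
        rw [Pker_eq_radialPow]
        linear_combination
          2 * pns n s * M * A * radialPow (n + 2 * s) z (x - y) * hcancel

lemma exists_abs_greenFluxDeriv_le (hs : 0 < s) (hv : IsTestFun v) (x : En n) :
    ∃ C : ℝ → ℝ, ContinuousOn C (Ioi 0) ∧ ∀ z, 0 < z → ∀ y,
      |greenFluxDeriv n s v x z y| ≤ C z * radialPow (n + 2 * s) z (x - y) := by
  obtain ⟨M, hM₀, hM⟩ := exists_abs_CSext_sub_le_const hs hv
  obtain ⟨A, _, hA⟩ := exists_abs_CSextConormal_le_const hs hv
  obtain ⟨D, hD₀, hD⟩ := exists_abs_lapX_Pker_le n s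
  obtain ⟨B, _, hB⟩ := hv.laplacian.exists_norm_le
  have hpow (q : ℝ) : ContinuousOn (fun z : ℝ ↦ z ^ q) (Ioi 0) :=
    continuousOn_id.rpow_const fun t ht ↦ Or.inl (ne_of_gt ht)
  refine ⟨fun z ↦ z ^ (1 - 2 * s) * (pns n s * z ^ (2 * s) *
      (2 * ((z ^ (2 * s - 1) * (A * z ^ (-(2 * s)))) ^ 2 + M * B))
      + D * z ^ (2 * s) * z ^ (-2 : ℝ) * M ^ 2), ?_, fun z hz y ↦ ?_⟩
  · have := hpow (1 - 2 * s)
    have := hpow (2 * s)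
    have := hpow (2 * s - 1)
    have := hpow (-(2 * s))
    have := hpow (-2)
    fun_prop
  have hP := Pker_nonneg hs hz (x - y)
  have hdiff : |(z ^ (2 * s - 1) * CSextConormal n s v y z) ^ 2
      - (CSext n s v y z - v x) * CSext n s (lapX v) y z|
      ≤ (z ^ (2 * s - 1) * (A * z ^ (-(2 * s)))) ^ 2 + M * B := by
    refine (abs_sub _ _).trans ?_
    rw [abs_pow, abs_mul, abs_mul, abs_of_pos (Real.rpow_pos_of_pos hz _)]
    gcongr
    exacts [hA z hz y, hM z hz x y, abs_CSext_le hs hz hB y]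
  have hlap : |lapX (Pker n s z) (x - y)|
      ≤ D * z ^ (2 * s) * (z ^ (-2 : ℝ) * radialPow (n + 2 * s) z (x - y)) :=
    (hD z hz _).trans (by gcongr; exact radialPow_add_two_le hz _)
  have hlap₀ := (abs_nonneg _).trans hlap
  rw [greenFluxDeriv, abs_mul, abs_of_pos (Real.rpow_pos_of_pos hz _), mul_assoc]
  refine mul_le_mul_of_nonneg_left ((abs_add_le _ _).trans ?_) (by positivity)
  rw [abs_mul, abs_mul, abs_mul, abs_two, abs_pow, abs_of_nonneg hP]
  calc _ ≤ Pker n s z (x - y) * (2 * ((z ^ (2 * s - 1) * (A * z ^ (-(2 * s)))) ^ 2 + M * B))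
        + D * z ^ (2 * s) * (z ^ (-2 : ℝ) * radialPow (n + 2 * s) z (x - y)) * M ^ 2 := by
        gcongr
        exact hM z hz x y
    _ = _ := by
        rw [Pker_eq_radialPow]
        ring

lemma hasDerivAt_integral_greenFlux (hs : 0 < s) (hv : IsTestFun v) (x : En n) (hz : 0 < z) :
    HasDerivAt (fun t ↦ ∫ y, greenFlux n s v x t y) (∫ y, greenFluxDeriv n s v x z y) z := by
  obtain ⟨C, hCcont, hC⟩ := exists_abs_greenFluxDeriv_le hs hv x
  exact hasDerivAt_integral_of_abs_le_radialPow (F' := greenFluxDeriv n s v x) (C := C)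
    (b := n + 2 * s) x (by linarith) (fun t ht ↦ integrable_greenFlux hs hv x ht)
    (fun t ht ↦ continuous_greenFluxDeriv hs hv x ht)
    (fun t ht y ↦ hasDerivAt_greenFlux hs hv x y ht) hC hCcont hz

lemma lapX_CSext_sub_sq (hs : 0 < s) (hv : IsTestFun v) (c : ℝ) (hz : 0 < z) (y : En n) :
    lapX (fun y ↦ (CSext n s v y z - c) ^ 2) y =
      2 * ((CSext n s v y z - c) * CSext n s (lapX v) y z)
        + 2 * ∑ j, CSext n s (pd j v) y z ^ 2 := by
  rw [lapX_sq ((isBddC2_CSext hs hv hz).sub_const c).contDiff, lapX_sub_const,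
    lapX_CSext hs hv hz]
  simp_rw [pd_sub_const, pd_CSext hv hz]
  ring

lemma isBddCont_energyDensity (hs : 0 < s) (hv : IsTestFun v) (hz : 0 < z) :
    IsBddCont (energyDensity n s v z) :=
  ((IsBddCont.const _).mul (isBddCont_CSextConormal hs hv hz)).sq.add
    (.sum fun j ↦ (isBddCont_CSext hs (hv.pderiv j) hz).sq)

lemma integral_greenFluxDeriv (hs : 0 < s) (hv : IsTestFun v) (x : En n) (hz : 0 < z) :
    ∫ y, greenFluxDeriv n s v x z y =
      2 * (Pconv n s z (energyDensity n s v z) x * z ^ (1 - 2 * s)) := by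
  have hP := (integrable_Pker (n := n) hs hz).comp_sub_left x
  have hW := (isBddC2_CSext hs hv hz).sub_const (v x)
  have hA : IsBddCont fun y ↦ z ^ (2 * s - 1) * CSextConormal n s v y z :=
    (IsBddCont.const _).mul (isBddCont_CSextConormal hs hv hz)
  have hWL := hW.isBddCont.mul (isBddCont_CSext hs hv.laplacian hz)
  simp only [greenFluxDeriv]
  rw [integral_const_mul, integral_add
      (((IsBddCont.const 2).mul (hA.sq.sub hWL)).integrable_mul hP)
      (hW.sq.isBddCont.integrable_mul ((integrable_lapX_Pker hs hz).comp_sub_left x)),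
    ← integral_Pker_mul_lapX hs hz hW.sq,
    ← integral_add (((IsBddCont.const 2).mul (hA.sq.sub hWL)).integrable_mul hP)
      (hW.sq.laplacian.integrable_mul hP), Pconv, mul_comm (∫ _, _), mul_left_comm,
    ← integral_const_mul 2]
  congr 2 with y
  rw [lapX_CSext_sub_sq hs hv _ hz, energyDensity]
  ring

lemma tendsto_integral_greenFlux_atTop (hs : 0 < s) (hv : IsTestFun v) (x : En n) :
    Tendsto (fun z ↦ ∫ y, greenFlux n s v x z y) atTop (𝓝 0) := by
  obtain ⟨C, hC⟩ := exists_abs_greenFlux_le hs hv x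
  have hlim := (tendsto_rpow_neg_atTop (by linarith : 0 < 2 * s)).const_mul
    (C * ∫ w : En n, radialPow (n + 2 * s) 1 w)
  rw [mul_zero] at hlim
  refine squeeze_zero_norm' ?_ hlim
  filter_upwards [eventually_gt_atTop 0] with z hz
  refine (abs_integral_le_of_abs_le_radialPow (by linarith) hz (hC z hz)).trans_eq ?_
  rw [sub_add_cancel_left]

lemma tendsto_rpow_nhdsGT_zero {p : ℝ} (hp : 0 < p) :
    Tendsto (fun z : ℝ ↦ z ^ p) (𝓝[>] 0) (𝓝 0) := by
  have hcont := (Real.continuousAt_rpow_const 0 p (Or.inr hp.le)).tendsto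
  rw [Real.zero_rpow hp.ne'] at hcont
  exact hcont.mono_left nhdsWithin_le_nhds

-- Any Hölder exponent `θ ∈ (s, 2s)` makes the singular integrals below converge; `θ ≤ 1` keeps test
-- functions Hölder.
lemma exists_holder_exponent (hs₀ : 0 < s) (hs₁ : s < 1) :
    ∃ θ : ℝ≥0, s < θ ∧ θ < 2 * s ∧ θ ≤ 1 := by
  obtain ⟨θ, hsθ, hθ⟩ := exists_between (lt_min hs₁ (by linarith : s < 2 * s))
  exact ⟨⟨θ, by linarith⟩, hsθ, hθ.trans_le (min_le_right _ _),
    NNReal.coe_le_coe.1 (hθ.le.trans (min_le_left _ _))⟩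

lemma tendsto_integral_greenFlux_fst_nhdsGT_zero (hs₀ : 0 < s) (hs₁ : s < 1) (hv : IsTestFun v)
    (x : En n) :
    Tendsto (fun z ↦ ∫ y,
      2 * Pker n s z (x - y) * (CSext n s v y z - v x) * CSextConormal n s v y z)
      (𝓝[>] 0) (𝓝 0) := by
  obtain ⟨θ, hsθ, hθs, hθ₁⟩ := exists_holder_exponent hs₀ hs₁
  obtain ⟨L, hL⟩ := hv.exists_holderWith hθ₁
  obtain ⟨W, hW₀, hW⟩ := exists_abs_CSext_sub_le hs₀ hv hL hθs
  obtain ⟨A, _, hA⟩ := exists_abs_CSextConormal_le hs₀ hv hL hθs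
  have hlim := (tendsto_rpow_nhdsGT_zero (p := 2 * (θ - s)) (by linarith)).const_mul
    (2 * pns n s * W * A * ∫ w : En n, radialPow (n + 2 * s - θ) 1 w)
  rw [mul_zero] at hlim
  refine squeeze_zero_norm' ?_ hlim
  filter_upwards [self_mem_nhdsWithin] with z (hz : 0 < z)
  have hpow : z ^ (2 * s) * z ^ (θ - 2 * s) = z ^ (θ : ℝ) := by
    rw [← Real.rpow_add hz, add_sub_cancel]
  refine (abs_integral_le_of_abs_le_radialPow (b := n + 2 * s - θ) (x := x)
    (C := 2 * pns n s * W * A * z ^ (θ : ℝ)) (by linarith) hz fun y ↦ ?_).trans_eq ?_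
  · have hP := Pker_nonneg hs₀ hz (x - y)
    have hrad := radialPow_pos (b := -θ) hz (x - y)
    rw [abs_mul, abs_mul, abs_mul, abs_two, abs_of_nonneg hP]
    calc 2 * Pker n s z (x - y) * |CSext n s v y z - v x| * |CSextConormal n s v y z|
        ≤ 2 * Pker n s z (x - y) * (W * radialPow (-θ) z (x - y)) * (A * z ^ (θ - 2 * s)) := by
          gcongr
          exacts [hW z hz x y, hA z hz y]
      _ = 2 * pns n s * W * A * z ^ (θ : ℝ) * radialPow (n + 2 * s - θ) z (x - y) := by
          rw [sub_eq_add_neg (n + 2 * s) (θ : ℝ), ← radialPow_mul_radialPow hz, ← hpow,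
            Pker_eq_radialPow]
          ring
  · have hexp : z ^ (θ : ℝ) * z ^ (n - (n + 2 * s - θ)) = z ^ (2 * (θ - s)) := by
      rw [← Real.rpow_add hz]
      congr 1
      ring
    rw [← hexp]
    ring

lemma tendsto_PkerConormal_nhdsGT_zero {w : En n} (hw : w ≠ 0) :
    Tendsto (fun z ↦ PkerConormal n s z w) (𝓝[>] 0)
      (𝓝 (2 * s * pns n s * ‖w‖ ^ (-(n + 2 * s)))) := by
  have hsq : Tendsto (fun z : ℝ ↦ z ^ 2) (𝓝[>] 0) (𝓝 0) := by
    simpa using tendsto_rpow_nhdsGT_zero zero_lt_two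
  have h := (((tendsto_radialPow_nhdsGT_zero (b := n + 2 * s) hw).const_mul (2 * s)).sub
    ((hsq.const_mul ((n : ℝ) + 2 * s)).mul
      (tendsto_radialPow_nhdsGT_zero (b := n + 2 * s + 2) hw))).const_mul (pns n s)
  rw [mul_zero, zero_mul, sub_zero, ← mul_assoc, mul_comm (pns n s)] at h
  exact h

lemma tendsto_CSext_nhdsGT_zero (hs : 0 < s) (hv : IsTestFun v) (y : En n) :
    Tendsto (CSext n s v y) (𝓝[>] 0) (𝓝 (v y)) := by
  obtain ⟨θ, hθ₀, hθ⟩ := exists_between (lt_min one_pos (by linarith : 0 < 2 * s))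
  lift θ to ℝ≥0 using hθ₀.le
  obtain ⟨L, hL⟩ := hv.exists_holderWith
    (NNReal.coe_le_coe.1 (hθ.le.trans (min_le_left _ _)) : θ ≤ 1)
  obtain ⟨C, _, hC⟩ := exists_abs_CSext_sub_le hs hv hL (hθ.trans_le (min_le_right _ _))
  have hlim := (tendsto_rpow_nhdsGT_zero hθ₀).const_mul C
  rw [mul_zero] at hlim
  refine tendsto_iff_norm_sub_tendsto_zero.2 (squeeze_zero_norm' ?_ hlim)
  filter_upwards [self_mem_nhdsWithin] with z (hz : 0 < z)
  have hzero : radialPow (-θ) z (0 : En n) = z ^ (θ : ℝ) := by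
    rw [radialPow, norm_zero, zero_pow two_ne_zero, zero_add, sq_rpow_div_two hz.le, neg_neg]
  simpa [hzero] using hC z hz y y

/-- The quadratic form `∫ (v(x) - v(y))² / |x - y|^{n+2s} dy` behind the carré du champ. -/
def singularEnergy (n : ℕ) (s : ℝ) (v : En n → ℝ) (x : En n) : ℝ :=
  ∫ y, (v x - v y) ^ 2 * ‖x - y‖ ^ (-(n + 2 * s))

lemma exists_abs_greenFlux_snd_le_norm_rpow (hs : 0 < s) (hv : IsTestFun v) (x : En n) :
    ∃ C, 0 ≤ C ∧ ∀ z, 0 < z → ∀ y ≠ x,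
      |PkerConormal n s z (x - y) * (CSext n s v y z - v x) ^ 2| ≤
        C * ‖x - y‖ ^ (-(n + 2 * s)) := by
  obtain ⟨M, _, hM⟩ := exists_abs_CSext_sub_le_const hs hv
  obtain ⟨K, hK₀, hK⟩ := exists_abs_PkerConormal_le n s
  refine ⟨K * M ^ 2, by positivity, fun z hz y hy ↦ ?_⟩
  have hrad := radialPow_pos (b := n + 2 * s) hz (x - y)
  rw [abs_mul, abs_pow]
  calc |PkerConormal n s z (x - y)| * |CSext n s v y z - v x| ^ 2
      ≤ K * radialPow (n + 2 * s) z (x - y) * M ^ 2 := by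
        gcongr
        exacts [hK z hz _, hM z hz x y]
    _ ≤ K * ‖x - y‖ ^ (-(n + 2 * s)) * M ^ 2 := by
        gcongr
        exact radialPow_le_norm_rpow (by positivity) (sub_ne_zero.2 hy.symm)
    _ = _ := by ring

lemma exists_abs_greenFlux_snd_le_norm_rpow_of_holderWith {θ L : ℝ≥0} (hs : 0 < s)
    (hθs : θ < 2 * s) (hθn : (2 * θ : ℝ) ≤ n + 2 * s) (hv : IsTestFun v) (hL : HolderWith L θ v)
    (x : En n) :
    ∃ C, 0 ≤ C ∧ ∀ z, 0 < z → ∀ y ≠ x,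
      |PkerConormal n s z (x - y) * (CSext n s v y z - v x) ^ 2| ≤
        C * ‖x - y‖ ^ (-(n + 2 * s - 2 * θ)) := by
  obtain ⟨W, _, hW⟩ := exists_abs_CSext_sub_le hs hv hL hθs
  obtain ⟨K, hK₀, hK⟩ := exists_abs_PkerConormal_le n s
  refine ⟨K * W ^ 2, by positivity, fun z hz y hy ↦ ?_⟩
  have hrad := radialPow_pos (b := n + 2 * s) hz (x - y)
  have hmul : radialPow (n + 2 * s - 2 * θ) z (x - y) =
      radialPow (n + 2 * s) z (x - y) * radialPow (-θ) z (x - y) ^ 2 := by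
    rw [sq, radialPow_mul_radialPow hz, radialPow_mul_radialPow hz]
    congr 1
    ring
  rw [abs_mul, abs_pow]
  calc |PkerConormal n s z (x - y)| * |CSext n s v y z - v x| ^ 2
      ≤ K * radialPow (n + 2 * s) z (x - y) * (W * radialPow (-θ) z (x - y)) ^ 2 := by
        gcongr
        exacts [hK z hz _, hW z hz x y]
    _ = K * W ^ 2 * radialPow (n + 2 * s - 2 * θ) z (x - y) := by
        rw [hmul]
        ring
    _ ≤ K * W ^ 2 * ‖x - y‖ ^ (-(n + 2 * s - 2 * θ)) := by
        gcongr
        exact radialPow_le_norm_rpow (by linarith) (sub_ne_zero.2 hy.symm)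

lemma exists_abs_greenFlux_snd_le [NeZero n] {θ L : ℝ≥0} (hs : 0 < s) (hθs : θ < 2 * s)
    (hθ₁ : θ ≤ 1) (hv : IsTestFun v) (hL : HolderWith L θ v) (x : En n) :
    ∃ C, ∀ z, 0 < z → ∀ y ≠ x, |PkerConormal n s z (x - y) * (CSext n s v y z - v x) ^ 2| ≤
      C * (‖x - y‖ ^ (-(n + 2 * s)) * min 1 (‖x - y‖ ^ (2 * θ : ℝ))) := by
  have hn : (1 : ℝ) ≤ n := by exact_mod_cast NeZero.one_le
  have hθn : (2 * θ : ℝ) ≤ n + 2 * s := by linarith [NNReal.coe_le_coe.2 hθ₁, NNReal.coe_one]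
  obtain ⟨C₁, hC₁, hfar⟩ := exists_abs_greenFlux_snd_le_norm_rpow hs hv x
  obtain ⟨C₂, hC₂, hnear⟩ :=
    exists_abs_greenFlux_snd_le_norm_rpow_of_holderWith hs hθs hθn hv hL x
  refine ⟨C₁ + C₂, fun z hz y hy ↦ ?_⟩
  have hnorm : 0 < ‖x - y‖ := norm_pos_iff.2 (sub_ne_zero.2 hy.symm)
  rw [mul_min_of_nonneg _ _ (by positivity), mul_min_of_nonneg _ _ (by positivity), mul_one,
    ← Real.rpow_add hnorm, show -(n + 2 * s) + 2 * θ = -(n + 2 * s - 2 * θ) by ring]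
  refine le_min ((hfar z hz y hy).trans ?_) ((hnear z hz y hy).trans ?_)
  · gcongr
    exact le_add_of_nonneg_right hC₂
  · gcongr
    exact le_add_of_nonneg_left hC₁

lemma tendsto_integral_greenFlux_snd_nhdsGT_zero [NeZero n] (hs₀ : 0 < s) (hs₁ : s < 1)
    (hv : IsTestFun v) (x : En n) :
    Tendsto (fun z ↦ ∫ y, PkerConormal n s z (x - y) * (CSext n s v y z - v x) ^ 2)
      (𝓝[>] 0) (𝓝 (2 * s * pns n s * singularEnergy n s v x)) := by
  obtain ⟨θ, hsθ, hθs, hθ₁⟩ := exists_holder_exponent hs₀ hs₁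
  obtain ⟨L, hL⟩ := hv.exists_holderWith hθ₁
  obtain ⟨C, hC⟩ := exists_abs_greenFlux_snd_le hs₀ hθs hθ₁ hv hL x
  have hne : ∀ᵐ y : En n, y ≠ x := by simp [ae_iff, measure_singleton]
  rw [singularEnergy, ← integral_const_mul]
  refine tendsto_integral_filter_of_dominated_convergence
    (fun y ↦ C * (‖x - y‖ ^ (-(n + 2 * s)) * min 1 (‖x - y‖ ^ (2 * θ : ℝ)))) ?_ ?_ ?_ ?_
  · filter_upwards [self_mem_nhdsWithin] with z hz
    exact (integrable_greenFlux_snd hs₀ hv x hz).aestronglyMeasurable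
  · filter_upwards [self_mem_nhdsWithin] with z hz
    filter_upwards [hne] with y hy
    exact hC z hz y hy
  · exact ((integrable_norm_rpow_neg_mul_min_one
      (by rw [finrank_euclideanSpace_fin]; linarith)
      (by rw [finrank_euclideanSpace_fin]; linarith)).comp_sub_left x).const_mul C
  · filter_upwards [hne] with y hy
    have hlim := (tendsto_PkerConormal_nhdsGT_zero (s := s) (sub_ne_zero.2 hy.symm)).mul
      (((tendsto_CSext_nhdsGT_zero hs₀ hv y).sub_const (v x)).pow 2)
    rwa [mul_assoc, mul_comm (_ ^ (_ : ℝ)), sub_sq_comm (v y) (v x)] at hlim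

lemma tendsto_integral_greenFlux_nhdsGT_zero [NeZero n] (hs₀ : 0 < s) (hs₁ : s < 1)
    (hv : IsTestFun v) (x : En n) :
    Tendsto (fun z ↦ ∫ y, greenFlux n s v x z y) (𝓝[>] 0)
      (𝓝 (-(2 * s * pns n s * singularEnergy n s v x))) := by
  have hlim := (tendsto_integral_greenFlux_fst_nhdsGT_zero hs₀ hs₁ hv x).sub
    (tendsto_integral_greenFlux_snd_nhdsGT_zero hs₀ hs₁ hv x)
  rw [zero_sub] at hlim
  refine hlim.congr' ?_
  filter_upwards [self_mem_nhdsWithin] with z hz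
  exact (integral_sub (integrable_greenFlux_fst hs₀ hv x hz)
    (integrable_greenFlux_snd hs₀ hv x hz)).symm

lemma Pconv_energyDensity_nonneg (hs : 0 < s) (v : En n → ℝ) (x : En n) (hz : 0 < z) :
    0 ≤ Pconv n s z (energyDensity n s v z) x := by
  refine integral_nonneg fun y ↦ mul_nonneg (Pker_nonneg hs hz _) ?_
  rw [energyDensity]
  positivity

lemma energy_identity [NeZero n] (hs₀ : 0 < s) (hs₁ : s < 1) (hv : IsTestFun v) (x : En n) :
    IntegrableOn (fun z ↦ Pconv n s z (energyDensity n s v z) x * z ^ (1 - 2 * s)) (Ioi 0) ∧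
      ∫ z in Ioi 0, Pconv n s z (energyDensity n s v z) x * z ^ (1 - 2 * s) =
        s * pns n s * singularEnergy n s v x := by
  set q : ℝ → ℝ := fun z ↦ Pconv n s z (energyDensity n s v z) x * z ^ (1 - 2 * s)
  set J : ℝ → ℝ := Function.update (fun z ↦ ∫ y, greenFlux n s v x z y) 0
    (-(2 * s * pns n s * singularEnergy n s v x)) with hJ
  have hJ₀ : J 0 = -(2 * s * pns n s * singularEnergy n s v x) := Function.update_self ..
  have hJpos {z : ℝ} (hz : 0 < z) : J z = ∫ y, greenFlux n s v x z y :=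
    Function.update_of_ne hz.ne' _ _
  have hcont : ContinuousWithinAt J (Ici 0) 0 := by
    rw [hJ, continuousWithinAt_update_same, Ici_sdiff_left]
    exact tendsto_integral_greenFlux_nhdsGT_zero hs₀ hs₁ hv x
  have hderiv : ∀ z ∈ Ioi (0 : ℝ), HasDerivAt J (2 * q z) z := by
    intro z hz
    rw [← integral_greenFluxDeriv hs₀ hv x hz]
    refine (hasDerivAt_integral_greenFlux hs₀ hv x hz).congr_of_eventuallyEq ?_
    filter_upwards [lt_mem_nhds hz] with t ht using hJpos ht
  have hnonneg : ∀ z ∈ Ioi (0 : ℝ), 0 ≤ 2 * q z := fun z (hz : 0 < z) ↦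
    mul_nonneg zero_le_two
      (mul_nonneg (Pconv_energyDensity_nonneg hs₀ v x hz) (Real.rpow_nonneg hz.le _))
  have htop : Tendsto J atTop (𝓝 0) := by
    refine (tendsto_integral_greenFlux_atTop hs₀ hv x).congr' ?_
    filter_upwards [eventually_gt_atTop 0] with z hz using (hJpos hz).symm
  refine ⟨(integrable_const_mul_iff (isUnit_iff_ne_zero.2 two_ne_zero) _).1
    (integrableOn_Ioi_deriv_of_nonneg hcont hderiv hnonneg htop), ?_⟩
  have hFTC := integral_Ioi_of_hasDerivAt_of_nonneg hcont hderiv hnonneg htop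
  rw [integral_const_mul, hJ₀] at hFTC
  linarith

end GreenFlux

section SingularIntegrals

variable {E F : Type*} [NormedAddCommGroup E] [NormedSpace ℝ E] [FiniteDimensional ℝ E]
  [MeasureSpace E] [BorelSpace E] [(volume : Measure E).IsAddHaarMeasure]
  [NormedAddCommGroup F] [NormedSpace ℝ F] {a : ℝ}

lemma setIntegral_norm_sub_gt (g : E → F) (x : E) (ε : ℝ) :
    ∫ y in {y | ε < ‖x - y‖}, g (x - y) = ∫ h in {h | ε < ‖h‖}, g h := by
  have hx : MeasurableSet {y : E | ε < ‖x - y‖} :=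
    measurableSet_lt measurable_const (by fun_prop)
  have h₀ : MeasurableSet {h : E | ε < ‖h‖} := measurableSet_lt measurable_const measurable_norm
  rw [← integral_indicator hx, ← integral_indicator h₀,
    ← integral_sub_left_eq_self (indicator {h : E | ε < ‖h‖} g) volume x]
  rfl

lemma setIntegral_norm_gt_comp_neg (g : E → F) (ε : ℝ) :
    ∫ h in {h | ε < ‖h‖}, g (-h) = ∫ h in {h | ε < ‖h‖}, g h := by
  have h₀ : MeasurableSet {h : E | ε < ‖h‖} := measurableSet_lt measurable_const measurable_norm
  rw [← integral_indicator h₀, ← integral_indicator h₀,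
    ← integral_neg_eq_self (indicator {h : E | ε < ‖h‖} g) volume]
  simp only [indicator, mem_ofPred_eq, norm_neg]

variable [Nontrivial E]

lemma integrable_norm_rpow_neg_smul {g : E → F} (hg : AEStronglyMeasurable g)
    (ha : finrank ℝ E < a) (ha' : a < finrank ℝ E + 2) {C : ℝ}
    (hC : ∀ h, ‖g h‖ ≤ C * min 1 (‖h‖ ^ 2)) : Integrable fun h ↦ ‖h‖ ^ (-a) • g h := by
  have hmeas : AEStronglyMeasurable fun h : E ↦ ‖h‖ ^ (-a) :=
    (measurable_norm.pow_const _).aestronglyMeasurable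
  refine ((integrable_norm_rpow_neg_mul_min_one ha ha').const_mul C).mono' (hmeas.smul hg)
    (ae_of_all _ fun h ↦ ?_)
  rw [norm_smul, Real.norm_of_nonneg (by positivity), Real.rpow_two, mul_left_comm]
  gcongr
  exact hC h

lemma integrableOn_norm_rpow_neg_smul {g : E → F} (hg : AEStronglyMeasurable g)
    (ha : finrank ℝ E < a) (ha' : a < finrank ℝ E + 2) {M : ℝ} (hM : ∀ h, ‖g h‖ ≤ M) {ε : ℝ}
    (hε : 0 < ε) : IntegrableOn (fun h ↦ ‖h‖ ^ (-a) • g h) {h | ε < ‖h‖} := by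
  have hS : MeasurableSet {h : E | ε < ‖h‖} := measurableSet_lt measurable_const measurable_norm
  have hM₀ : 0 ≤ M := (norm_nonneg _).trans (hM 0)
  have hδ : 0 < min 1 (ε ^ 2) := by positivity
  rw [← integrable_indicator_iff hS]
  simp only [indicator_smul]
  refine integrable_norm_rpow_neg_smul (hg.indicator hS) ha ha' (C := M / min 1 (ε ^ 2)) fun h ↦ ?_
  by_cases hh : h ∈ {h : E | ε < ‖h‖}
  · rw [indicator_of_mem hh, div_mul_eq_mul_div, le_div_iff₀ hδ]
    have : ε < ‖h‖ := hh
    gcongr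
    exact hM h
  · rw [indicator_of_notMem hh, norm_zero]
    positivity

lemma aecover_norm_gt :
    AECover (volume : Measure E) (𝓝[>] 0) fun ε ↦ {h : E | ε < ‖h‖} where
  ae_eventually_mem := by
    filter_upwards [Measure.ae_ne volume (0 : E)] with h hh
    exact mem_nhdsWithin_of_mem_nhds (gt_mem_nhds (norm_pos_iff.2 hh))
  measurableSet _ := measurableSet_lt measurable_const measurable_norm

end SingularIntegrals

section SecondDifference

variable {E F : Type*} [NormedAddCommGroup E] [NormedAddCommGroup F] [NormedSpace ℝ F] {w : E → F}

/-- The symmetric second difference of `w` at `x` with increment `h`, up to sign. -/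
def secondDiff (w : E → F) (x h : E) : F := (2 : ℝ) • w x - w (x + h) - w (x - h)

lemma continuous_secondDiff (hw : Continuous w) (x : E) : Continuous (secondDiff w x) := by
  unfold secondDiff
  fun_prop

lemma norm_secondDiff_le {M : ℝ} (hM : ∀ x, ‖w x‖ ≤ M) (x h : E) :
    ‖secondDiff w x h‖ ≤ 4 * M :=
  calc ‖secondDiff w x h‖ ≤ ‖(2 : ℝ) • w x‖ + ‖w (x + h)‖ + ‖w (x - h)‖ :=
        (norm_sub_le _ _).trans (by gcongr; exact norm_sub_le _ _)
    _ ≤ 2 * M + M + M := by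
        rw [norm_smul, Real.norm_two]
        gcongr <;> exact hM _
    _ = 4 * M := by ring

variable [NormedSpace ℝ E]

lemma norm_secondDiff_le_sq {K : ℝ≥0} (hw : Differentiable ℝ w)
    (hK : LipschitzWith K (fderiv ℝ w)) (x h : E) : ‖secondDiff w x h‖ ≤ 2 * K * ‖h‖ ^ 2 := by
  have hderiv (t : E) : HasFDerivAt (fun t ↦ w (x + t) + w (x - t))
      (fderiv ℝ w (x + t) - fderiv ℝ w (x - t)) t := by
    have hplus := (hw (x + t)).hasFDerivAt.comp t ((hasFDerivAt_id t).const_add x)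
    have hminus := (hw (x - t)).hasFDerivAt.comp t ((hasFDerivAt_id t).const_sub x)
    exact (hplus.add hminus).congr_fderiv (by ext; simp [sub_eq_add_neg])
  have hbound : ∀ t ∈ Metric.closedBall (0 : E) ‖h‖,
      ‖fderiv ℝ w (x + t) - fderiv ℝ w (x - t)‖ ≤ K * (2 * ‖h‖) := fun t ht ↦ by
    refine (hK.norm_sub_le _ _).trans ?_
    rw [add_sub_sub_cancel, ← two_smul ℝ t, norm_smul, Real.norm_two]
    gcongr
    simpa using ht
  calc ‖secondDiff w x h‖ = ‖w (x + h) + w (x - h) - (w (x + 0) + w (x - 0))‖ := by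
        rw [← norm_neg, secondDiff, two_smul, add_zero, sub_zero]
        congr 1
        abel
    _ ≤ K * (2 * ‖h‖) * ‖h - 0‖ :=
        (convex_closedBall 0 ‖h‖).norm_image_sub_le_of_norm_hasFDerivWithin_le
          (fun t _ ↦ (hderiv t).hasFDerivWithinAt) hbound (by simp) (by simp)
    _ = 2 * K * ‖h‖ ^ 2 := by
        rw [sub_zero]
        ring

lemma IsTestFun.exists_norm_secondDiff_le (hw : IsTestFun w) :
    ∃ C, ∀ x h, ‖secondDiff w x h‖ ≤ C * min 1 (‖h‖ ^ 2) := by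
  obtain ⟨M, hM₀, hM⟩ := hw.exists_norm_le
  obtain ⟨K, hK⟩ := ContDiff.lipschitzWith_of_hasCompactSupport hw.fderiv.hasCompactSupport
    hw.fderiv.contDiff (by simp)
  refine ⟨4 * M + 2 * K, fun x h ↦ ?_⟩
  rw [mul_min_of_nonneg _ _ (by positivity), mul_one]
  refine le_min ((norm_secondDiff_le hM x h).trans (by simp))
    ((norm_secondDiff_le_sq hw.differentiable hK x h).trans ?_)
  gcongr
  linarith

lemma IsTestFun.exists_norm_sub_le (hw : IsTestFun w) :
    ∃ C, 0 ≤ C ∧ ∀ x h, ‖w x - w (x - h)‖ ≤ C * min 1 ‖h‖ := by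
  obtain ⟨M, hM₀, hM⟩ := hw.exists_norm_le
  obtain ⟨K, hK⟩ :=
    ContDiff.lipschitzWith_of_hasCompactSupport hw.hasCompactSupport hw.contDiff (by simp)
  refine ⟨2 * M + K, by positivity, fun x h ↦ ?_⟩
  rw [mul_min_of_nonneg _ _ (by positivity), mul_one]
  refine le_min ?_ ?_
  · exact (norm_sub_le _ _).trans (by linarith [hM x, hM (x - h), K.coe_nonneg])
  · refine (hK.norm_sub_le x (x - h)).trans ?_
    rw [sub_sub_cancel]
    gcongr
    linarith

end SecondDifference

section PrincipalValue

variable {E F : Type*} [NormedAddCommGroup E] [NormedSpace ℝ E] [FiniteDimensional ℝ E]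
  [Nontrivial E] [MeasureSpace E] [BorelSpace E] [(volume : Measure E).IsAddHaarMeasure]
  [NormedAddCommGroup F] [NormedSpace ℝ F] {a : ℝ} {w : E → F}

/-- The absolutely convergent integral of symmetric second differences of `w` at `x`. It is twice
the principal value of `∫ ‖x - y‖⁻ᵃ (w x - w y) dy`. -/
def symmSingularIntegral (a : ℝ) (w : E → F) (x : E) : F := ∫ h, ‖h‖ ^ (-a) • secondDiff w x h

lemma integrable_norm_rpow_neg_smul_secondDiff (ha : finrank ℝ E < a) (ha' : a < finrank ℝ E + 2)
    (hw : IsTestFun w) (x : E) : Integrable fun h ↦ ‖h‖ ^ (-a) • secondDiff w x h :=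
  let ⟨_, hC⟩ := hw.exists_norm_secondDiff_le
  integrable_norm_rpow_neg_smul (continuous_secondDiff hw.continuous x).aestronglyMeasurable ha ha'
    (hC x)

lemma setIntegral_secondDiff_eq_two_smul (ha : finrank ℝ E < a) (ha' : a < finrank ℝ E + 2)
    (hw : IsTestFun w) (x : E) {ε : ℝ} (hε : 0 < ε) :
    ∫ h in {h | ε < ‖h‖}, ‖h‖ ^ (-a) • secondDiff w x h =
      (2 : ℝ) • ∫ y in {y | ε < ‖x - y‖}, ‖x - y‖ ^ (-a) • (w x - w y) := by
  obtain ⟨M, -, hM⟩ := hw.exists_norm_le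
  have hw₀ := hw.continuous
  have hint {e : E → E} (he : Continuous e) :
      IntegrableOn (fun h ↦ ‖h‖ ^ (-a) • (w x - w (e h))) {h | ε < ‖h‖} :=
    integrableOn_norm_rpow_neg_smul (by fun_prop : Continuous _).aestronglyMeasurable ha ha'
      (fun h ↦ (norm_sub_le _ _).trans (add_le_add (hM x) (hM _))) hε
  have hneg := setIntegral_norm_gt_comp_neg (fun h ↦ ‖h‖ ^ (-a) • (w x - w (x - h))) ε
  have htrans := setIntegral_norm_sub_gt (fun h ↦ ‖h‖ ^ (-a) • (w x - w (x - h))) x ε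
  simp only [norm_neg, sub_neg_eq_add, sub_sub_cancel] at hneg htrans
  calc ∫ h in {h | ε < ‖h‖}, ‖h‖ ^ (-a) • secondDiff w x h
      = ∫ h in {h | ε < ‖h‖},
          (‖h‖ ^ (-a) • (w x - w (x + h)) + ‖h‖ ^ (-a) • (w x - w (x - h))) := by
        congr 1 with h
        rw [secondDiff, two_smul, ← smul_add]
        congr 1
        abel
    _ = (2 : ℝ) • ∫ y in {y | ε < ‖x - y‖}, ‖x - y‖ ^ (-a) • (w x - w y) := by
        rw [integral_add (hint (by fun_prop)) (hint (by fun_prop)), hneg, htrans, two_smul]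

lemma tendsto_setIntegral_norm_rpow_neg_smul_sub (ha : finrank ℝ E < a)
    (ha' : a < finrank ℝ E + 2) (hw : IsTestFun w) (x : E) :
    Tendsto (fun ε : ℝ ↦ ∫ y in {y | ε < ‖x - y‖}, ‖x - y‖ ^ (-a) • (w x - w y)) (𝓝[>] 0)
      (𝓝 ((2 : ℝ)⁻¹ • symmSingularIntegral a w x)) := by
  have hlim := aecover_norm_gt.integral_tendsto_of_countably_generated
    (integrable_norm_rpow_neg_smul_secondDiff ha ha' hw x)
  refine (hlim.const_smul (2 : ℝ)⁻¹).congr' ?_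
  filter_upwards [self_mem_nhdsWithin] with ε hε
  rw [setIntegral_secondDiff_eq_two_smul ha ha' hw x hε, inv_smul_smul₀ two_ne_zero]

end PrincipalValue

section SingularForm

universe u

variable {E F G H : Type u} [NormedAddCommGroup E] [NormedSpace ℝ E] [NormedAddCommGroup F]
  [NormedSpace ℝ F] [NormedAddCommGroup G] [NormedSpace ℝ G] [NormedAddCommGroup H]
  [NormedSpace ℝ H] {a : ℝ} {B : F →L[ℝ] G →L[ℝ] H} {u : E → F} {v : E → G}

/-- The bilinear expression `∫ ‖h‖⁻ᵃ B(u(x) - u(x - h), v(x) - v(x - h)) dh`. Values in arbitrary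
normed spaces are allowed so that its derivative is again a sum of two such expressions. -/
def singularForm [MeasureSpace E] (a : ℝ) (B : F →L[ℝ] G →L[ℝ] H) (u : E → F) (v : E → G)
    (x : E) : H :=
  ∫ h, ‖h‖ ^ (-a) • B (u x - u (x - h)) (v x - v (x - h))

lemma exists_norm_bilin_sub_le (B : F →L[ℝ] G →L[ℝ] H) (hu : IsTestFun u) (hv : IsTestFun v) :
    ∃ C, ∀ x h, ‖B (u x - u (x - h)) (v x - v (x - h))‖ ≤ C * min 1 (‖h‖ ^ 2) := by
  obtain ⟨C, hC₀, hC⟩ := hu.exists_norm_sub_le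
  obtain ⟨D, hD₀, hD⟩ := hv.exists_norm_sub_le
  refine ⟨‖B‖ * C * D, fun x h ↦ ?_⟩
  have hmin : min 1 ‖h‖ * min 1 ‖h‖ ≤ min 1 (‖h‖ ^ 2) := by
    refine le_min (mul_le_one₀ (min_le_left _ _) (by positivity) (min_le_left _ _)) ?_
    rw [pow_two]
    gcongr <;> exact min_le_right _ _
  calc ‖B (u x - u (x - h)) (v x - v (x - h))‖
      ≤ ‖B‖ * ‖u x - u (x - h)‖ * ‖v x - v (x - h)‖ := B.le_opNorm₂ _ _
    _ ≤ ‖B‖ * (C * min 1 ‖h‖) * (D * min 1 ‖h‖) := by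
        gcongr
        exacts [hC x h, hD x h]
    _ = ‖B‖ * C * D * (min 1 ‖h‖ * min 1 ‖h‖) := by ring
    _ ≤ ‖B‖ * C * D * min 1 (‖h‖ ^ 2) := by gcongr

lemma hasFDerivAt_bilin_sub (B : F →L[ℝ] G →L[ℝ] H) (hu : Differentiable ℝ u)
    (hv : Differentiable ℝ v) (x h : E) :
    HasFDerivAt (fun x ↦ B (u x - u (x - h)) (v x - v (x - h)))
      (B.precompR E (u x - u (x - h)) (fderiv ℝ v x - fderiv ℝ v (x - h)) +
        B.precompL E (fderiv ℝ u x - fderiv ℝ u (x - h)) (v x - v (x - h))) x := by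
  have hshift {K : Type u} [NormedAddCommGroup K] [NormedSpace ℝ K] {g : E → K}
      (hg : Differentiable ℝ g) :
      HasFDerivAt (fun x ↦ g x - g (x - h)) (fderiv ℝ g x - fderiv ℝ g (x - h)) x :=
    (hg x).hasFDerivAt.sub (((hg (x - h)).hasFDerivAt.comp x
      ((hasFDerivAt_id x).sub_const h)).congr_fderiv (by ext; simp))
  exact B.hasFDerivAt_of_bilinear (hshift hu) (hshift hv)

variable [FiniteDimensional ℝ E] [Nontrivial E] [MeasureSpace E] [BorelSpace E]
  [(volume : Measure E).IsAddHaarMeasure]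

lemma integrable_norm_rpow_neg_smul_bilin_sub (ha : finrank ℝ E < a) (ha' : a < finrank ℝ E + 2)
    (B : F →L[ℝ] G →L[ℝ] H) (hu : IsTestFun u) (hv : IsTestFun v) (x : E) :
    Integrable fun h ↦ ‖h‖ ^ (-a) • B (u x - u (x - h)) (v x - v (x - h)) := by
  obtain ⟨_, hC⟩ := exists_norm_bilin_sub_le B hu hv
  have := hu.continuous
  have := hv.continuous
  exact integrable_norm_rpow_neg_smul (by fun_prop : Continuous _).aestronglyMeasurable ha ha'
    (hC x)

lemma hasFDerivAt_singularForm (ha : finrank ℝ E < a) (ha' : a < finrank ℝ E + 2)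
    (B : F →L[ℝ] G →L[ℝ] H) (hu : IsTestFun u) (hv : IsTestFun v) (x : E) :
    HasFDerivAt (singularForm a B u v)
      (singularForm a (B.precompR E) u (fderiv ℝ v) x +
        singularForm a (B.precompL E) (fderiv ℝ u) v x) x := by
  obtain ⟨C, hC⟩ := exists_norm_bilin_sub_le (B.precompR E) hu hv.fderiv
  obtain ⟨D, hD⟩ := exists_norm_bilin_sub_le (B.precompL E) hu.fderiv hv
  have hint₁ := integrable_norm_rpow_neg_smul_bilin_sub ha ha' (B.precompR E) hu hv.fderiv
  have hint₂ := integrable_norm_rpow_neg_smul_bilin_sub ha ha' (B.precompL E) hu.fderiv hv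
  have hint₀ := integrable_norm_rpow_neg_smul_bilin_sub ha ha' B hu hv
  rw [singularForm, singularForm, ← integral_add (hint₁ x) (hint₂ x)]
  refine hasFDerivAt_integral_of_dominated_of_fderiv_le (𝕜 := ℝ) (s := univ)
    (F' := fun x h ↦ ‖h‖ ^ (-a) • B.precompR E (u x - u (x - h)) (fderiv ℝ v x - fderiv ℝ v (x - h))
      + ‖h‖ ^ (-a) • B.precompL E (fderiv ℝ u x - fderiv ℝ u (x - h)) (v x - v (x - h)))
    (bound := fun h ↦ (C + D) * (‖h‖ ^ (-a) * min 1 (‖h‖ ^ (2 : ℝ)))) univ_mem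
    (.of_forall fun y ↦ (hint₀ y).aestronglyMeasurable) (hint₀ x)
    ((hint₁ x).add (hint₂ x)).aestronglyMeasurable (ae_of_all _ fun h y _ ↦ ?_)
    ((integrable_norm_rpow_neg_mul_min_one ha ha').const_mul _) (ae_of_all _ fun h y _ ↦ ?_)
  · rw [← smul_add, norm_smul, Real.norm_of_nonneg (by positivity), Real.rpow_two, mul_left_comm,
      add_mul]
    gcongr
    exact (norm_add_le _ _).trans (add_le_add (hC y h) (hD y h))
  · rw [← smul_add]
    exact (hasFDerivAt_bilin_sub B hu.differentiable hv.differentiable y h).const_smul _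

lemma contDiff_singularForm (ha : finrank ℝ E < a) (ha' : a < finrank ℝ E + 2)
    (hu : IsTestFun u) (hv : IsTestFun v) : ContDiff ℝ ∞ (singularForm a B u v) := by
  refine contDiff_infty.2 fun k ↦ ?_
  induction k generalizing F G H with
  | zero =>
    rw [Nat.cast_zero, contDiff_zero, continuous_iff_continuousAt]
    exact fun x ↦ (hasFDerivAt_singularForm ha ha' B hu hv x).continuousAt
  | succ k ih =>
    have hderiv := hasFDerivAt_singularForm ha ha' B hu hv
    rw [Nat.cast_succ, contDiff_succ_iff_fderiv]
    refine ⟨fun x ↦ (hderiv x).differentiableAt, by simp, ?_⟩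
    rw [funext fun x ↦ (hderiv x).fderiv]
    exact (ih hu hv.fderiv).add (ih hu.fderiv hv)

end SingularForm

section ProductRule

variable {E : Type} [NormedAddCommGroup E] [NormedSpace ℝ E] [FiniteDimensional ℝ E]
  [Nontrivial E] [MeasureSpace E] [BorelSpace E] [(volume : Measure E).IsAddHaarMeasure]
  {a : ℝ} {u v : E → ℝ}

lemma symmSingularIntegral_mul (ha : finrank ℝ E < a) (ha' : a < finrank ℝ E + 2)
    (hu : IsTestFun u) (hv : IsTestFun v) (x : E) :
    symmSingularIntegral a (fun y ↦ u y * v y) x =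
      u x * symmSingularIntegral a v x + v x * symmSingularIntegral a u x -
        2 * singularForm a (.mul ℝ ℝ) u v x := by
  have hT {w : E → ℝ} (hw : IsTestFun w) :=
    integrable_norm_rpow_neg_smul_secondDiff ha ha' hw x
  have hB := integrable_norm_rpow_neg_smul_bilin_sub ha ha' (.mul ℝ ℝ) hu hv x
  have hreflect := integral_neg_eq_self
    (fun h ↦ ‖h‖ ^ (-a) • ContinuousLinearMap.mul ℝ ℝ (u x - u (x - h)) (v x - v (x - h))) volume
  have hB' := hB.comp_neg
  have hform : 2 * singularForm a (.mul ℝ ℝ) u v x = ∫ h,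
      (‖h‖ ^ (-a) • ContinuousLinearMap.mul ℝ ℝ (u x - u (x - -h)) (v x - v (x - -h)) +
        ‖h‖ ^ (-a) • ContinuousLinearMap.mul ℝ ℝ (u x - u (x - h)) (v x - v (x - h))) := by
    simp only [norm_neg] at hreflect hB'
    rw [integral_add hB' hB, hreflect, two_mul, singularForm]
  rw [hform, symmSingularIntegral, symmSingularIntegral, symmSingularIntegral,
    ← integral_const_mul, ← integral_const_mul,
    ← integral_add ((hT hv).const_mul _) ((hT hu).const_mul _), ← integral_sub]
  · congr 1 with h
    simp only [secondDiff, smul_eq_mul, ContinuousLinearMap.mul_apply', sub_neg_eq_add]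
    ring
  · exact ((hT hv).const_mul _).add ((hT hu).const_mul _)
  · simp only [norm_neg] at hB'
    exact hB'.add hB

end ProductRule

section CarreDuChamp

variable {n : ℕ} {s : ℝ} {u v w : En n → ℝ}

lemma singularEnergy_eq_singularForm (v : En n → ℝ) (x : En n) :
    singularEnergy n s v x = singularForm (n + 2 * s) (.mul ℝ ℝ) v v x := by
  rw [singularForm, ← integral_sub_left_eq_self (fun h ↦ _) volume x, singularEnergy]
  simp only [sub_sub_cancel, ContinuousLinearMap.mul_apply', smul_eq_mul, ← pow_two, mul_comm]

lemma finrank_lt_natCast_add_two_mul (hs : 0 < s) : (finrank ℝ (En n) : ℝ) < n + 2 * s := by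
  rw [finrank_euclideanSpace_fin]
  linarith

lemma natCast_add_two_mul_lt_finrank_add_two (hs : s < 1) :
    (n : ℝ) + 2 * s < finrank ℝ (En n) + 2 := by
  rw [finrank_euclideanSpace_fin]
  linarith

lemma fracLap_eq_symmSingularIntegral [NeZero n] (hs₀ : 0 < s) (hs₁ : s < 1) (hw : IsTestFun w)
    (x : En n) : fracLap n s w x = Cns n s / 2 * symmSingularIntegral (n + 2 * s) w x := by
  have hlim := tendsto_setIntegral_norm_rpow_neg_smul_sub
    (finrank_lt_natCast_add_two_mul hs₀) (natCast_add_two_mul_lt_finrank_add_two hs₁) hw x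
  have hquot (y : En n) : (w x - w y) / ‖x - y‖ ^ ((n : ℝ) + 2 * s) =
      ‖x - y‖ ^ (-((n : ℝ) + 2 * s)) • (w x - w y) := by
    rw [Real.rpow_neg (norm_nonneg _), smul_eq_mul, div_eq_inv_mul]
  simp only [fracLap, hquot]
  rw [hlim.limUnder_eq, smul_eq_mul]
  ring

lemma Gamma1_eq_singularForm [NeZero n] (hs₀ : 0 < s) (hs₁ : s < 1) (hu : IsTestFun u)
    (hv : IsTestFun v) :
    Gamma1 n s u v = fun x ↦ Cns n s / 2 * singularForm (n + 2 * s) (.mul ℝ ℝ) u v x := by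
  ext x
  rw [Gamma1, Lam, Lam, Lam, fracLap_eq_symmSingularIntegral hs₀ hs₁ (hu.mul hv),
    fracLap_eq_symmSingularIntegral hs₀ hs₁ hu, fracLap_eq_symmSingularIntegral hs₀ hs₁ hv,
    symmSingularIntegral_mul (finrank_lt_natCast_add_two_mul hs₀)
      (natCast_add_two_mul_lt_finrank_add_two hs₁) hu hv]
  ring

lemma Gamma1_comm (u v : En n → ℝ) : Gamma1 n s u v = Gamma1 n s v u := by
  ext x
  simp only [Gamma1, mul_comm (u _) (v _)]
  ring

lemma contDiff_Gamma1 [NeZero n] (hs₀ : 0 < s) (hs₁ : s < 1) (hu : IsTestFun u)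
    (hv : IsTestFun v) : ContDiff ℝ ∞ (Gamma1 n s u v) := by
  rw [Gamma1_eq_singularForm hs₀ hs₁ hu hv]
  exact contDiff_const.mul (contDiff_singularForm (finrank_lt_natCast_add_two_mul hs₀)
    (natCast_add_two_mul_lt_finrank_add_two hs₁) hu hv)

lemma pd_Gamma1 [NeZero n] (hs₀ : 0 < s) (hs₁ : s < 1) (hu : IsTestFun u) (hv : IsTestFun v)
    (i : Fin n) :
    pd i (Gamma1 n s u v) = fun x ↦ Gamma1 n s u (pd i v) x + Gamma1 n s (pd i u) v x := by
  have ha : (finrank ℝ (En n) : ℝ) < n + 2 * s := finrank_lt_natCast_add_two_mul hs₀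
  have ha' : (n : ℝ) + 2 * s < finrank ℝ (En n) + 2 := natCast_add_two_mul_lt_finrank_add_two hs₁
  have hderiv := hasFDerivAt_singularForm ha ha' (.mul ℝ ℝ) hu hv
  have happly (x : En n) : pd i (singularForm (n + 2 * s) (.mul ℝ ℝ) u v) x =
      singularForm (n + 2 * s) (.mul ℝ ℝ) u (pd i v) x +
        singularForm (n + 2 * s) (.mul ℝ ℝ) (pd i u) v x := by
    rw [pd, (hderiv x).fderiv, add_apply]
    simp only [singularForm]
    rw [ContinuousLinearMap.integral_apply
        (integrable_norm_rpow_neg_smul_bilin_sub ha ha' _ hu hv.fderiv x),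
      ContinuousLinearMap.integral_apply
        (integrable_norm_rpow_neg_smul_bilin_sub ha ha' _ hu.fderiv hv x)]
    rfl
  rw [Gamma1_eq_singularForm hs₀ hs₁ hu hv, Gamma1_eq_singularForm hs₀ hs₁ hu (hv.pderiv i),
    Gamma1_eq_singularForm hs₀ hs₁ (hu.pderiv i) hv,
    pd_const_mul fun x ↦ (hderiv x).differentiableAt]
  ext x
  rw [happly, mul_add]

lemma Gamma1_sum_right [NeZero n] {ι : Type*} {t : Finset ι} {v : ι → En n → ℝ} (hs₀ : 0 < s)
    (hs₁ : s < 1) (hu : IsTestFun u) (hv : ∀ i ∈ t, IsTestFun (v i)) (x : En n) :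
    Gamma1 n s u (fun y ↦ ∑ i ∈ t, v i y) x = ∑ i ∈ t, Gamma1 n s u (v i) x := by
  rw [Gamma1_eq_singularForm hs₀ hs₁ hu (.sum hv),
    Finset.sum_congr rfl fun i hi ↦ congrFun (Gamma1_eq_singularForm hs₀ hs₁ hu (hv i hi)) x,
    ← Finset.mul_sum]
  simp only [singularForm]
  rw [← integral_finsetSum _ fun i hi ↦ integrable_norm_rpow_neg_smul_bilin_sub
    (finrank_lt_natCast_add_two_mul hs₀) (natCast_add_two_mul_lt_finrank_add_two hs₁) _ hu
    (hv i hi) x]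
  simp only [← Finset.sum_sub_distrib, map_sum, Finset.smul_sum]

lemma lapX_Gamma1_self [NeZero n] (hs₀ : 0 < s) (hs₁ : s < 1) (hu : IsTestFun u) (x : En n) :
    lapX (Gamma1 n s u u) x =
      2 * ∑ i, Gamma1 n s u (pd i (pd i u)) x + 2 * ∑ i, Gamma1 n s (pd i u) (pd i u) x := by
  have hdiff {v w : En n → ℝ} (hv : IsTestFun v) (hw : IsTestFun w) :
      Differentiable ℝ (Gamma1 n s v w) := (contDiff_Gamma1 hs₀ hs₁ hv hw).differentiable (by simp)
  rw [lapX, Finset.mul_sum, Finset.mul_sum, ← Finset.sum_add_distrib]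
  refine Finset.sum_congr rfl fun i _ ↦ ?_
  have hui := hu.pderiv i
  rw [pd_Gamma1 hs₀ hs₁ hu hu, pd_add (hdiff hu hui) (hdiff hui hu), pd_Gamma1 hs₀ hs₁ hu hui,
    pd_Gamma1 hs₀ hs₁ hui hu, Gamma1_comm (pd i (pd i u)) u]
  ring

lemma half_lapX_Gamma1_sub_Gamma1_lapX [NeZero n] (hs₀ : 0 < s) (hs₁ : s < 1) (hu : IsTestFun u)
    (x : En n) :
    (1 / 2) * lapX (Gamma1 n s u u) x - Gamma1 n s u (lapX u) x =
      ∑ i, Gamma1 n s (pd i u) (pd i u) x := by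
  have hlap : Gamma1 n s u (lapX u) x = ∑ i, Gamma1 n s u (pd i (pd i u)) x :=
    Gamma1_sum_right hs₀ hs₁ hu (fun i _ ↦ (hu.pderiv i).pderiv i) x
  rw [lapX_Gamma1_self hs₀ hs₁ hu, hlap]
  ring

lemma betaS_mul_pns (n : ℕ) (hs₀ : 0 < s) (hs₁ : s < 1) :
    betaS s * (s * pns n s) = Cns n s / 2 := by
  have hΓ : 0 < Real.Gamma (1 - s) := Real.Gamma_pos_of_pos (by linarith)
  have : 0 < Real.Gamma s := Real.Gamma_pos_of_pos hs₀
  have hrec : Real.Gamma (1 - s) = -s * Real.Gamma (-s) := by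
    rw [← Real.Gamma_add_one (by linarith), neg_add_eq_sub]
  have habs : |Real.Gamma (-s)| = Real.Gamma (1 - s) / s := by
    rw [abs_of_neg (by nlinarith), hrec]
    field_simp
  have hpow : (2 : ℝ) ^ (2 * s - 1) = 4 ^ s / 2 := by
    rw [Real.rpow_sub two_pos, Real.rpow_one, Real.rpow_mul two_pos.le]
    norm_num
  rw [betaS, pns, Cns, habs, hpow]
  field_simp

lemma Gamma1_self_eq_integral_energyDensity [NeZero n] (hs₀ : 0 < s) (hs₁ : s < 1)
    (hv : IsTestFun v) (x : En n) :
    Gamma1 n s v v x =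
      betaS s * ∫ z in Ioi 0, Pconv n s z (energyDensity n s v z) x * z ^ (1 - 2 * s) := by
  rw [(energy_identity hs₀ hs₁ hv x).2, ← mul_assoc, betaS_mul_pns n hs₀ hs₁,
    singularEnergy_eq_singularForm, Gamma1_eq_singularForm hs₀ hs₁ hv hv]

end CarreDuChamp

section Bochner

variable {n : ℕ} {s z : ℝ} {u : En n → ℝ}

lemma hessian_sq_add_eq_sum_energyDensity (hs : 0 < s) (hu : IsTestFun u) (hz : 0 < z) (y : En n) :
    (∑ i, ∑ j, (pd i (pd j (fun y' ↦ CSext n s u y' z)) y) ^ 2) +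
        ∑ i, (pd i (fun y' ↦ deriv (CSext n s u y') z) y) ^ 2 =
      ∑ i, energyDensity n s (pd i u) z y := by
  have hderiv : (fun y' ↦ deriv (CSext n s u y') z) =
      fun y' ↦ z ^ (2 * s - 1) * CSextConormal n s u y' z :=
    funext fun y' ↦ (hasDerivAt_CSext hs hu y' hz).deriv
  have hconormal : Differentiable ℝ fun y' ↦ CSextConormal n s u y' z :=
    (contDiff_CSextConormal hu hz).differentiable (by simp)
  simp only [hderiv, pd_const_mul hconormal, pd_CSextConormal hu hz, pd_CSext hu hz,
    pd_CSext (hu.pderiv _) hz, energyDensity, Finset.sum_add_distrib]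
  rw [Finset.sum_comm, add_comm]

lemma Pconv_sum {ι : Type*} {t : Finset ι} {f : ι → En n → ℝ} (hs : 0 < s) (hz : 0 < z)
    (hf : ∀ i, IsBddCont (f i)) (x : En n) :
    Pconv n s z (fun y ↦ ∑ i ∈ t, f i y) x = ∑ i ∈ t, Pconv n s z (f i) x := by
  simp only [Pconv, Finset.mul_sum]
  exact integral_finsetSum _ fun i _ ↦
    (hf i).integrable_mul ((integrable_Pker hs hz).comp_sub_left x)

lemma Pconv_hessian_sq_add (hs : 0 < s) (hu : IsTestFun u) (hz : 0 < z) (x : En n) :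
    Pconv n s z (fun y ↦ (∑ i, ∑ j, (pd i (pd j (fun y' ↦ CSext n s u y' z)) y) ^ 2) +
        ∑ i, (pd i (fun y' ↦ deriv (CSext n s u y') z) y) ^ 2) x =
      ∑ i, Pconv n s z (energyDensity n s (pd i u) z) x := by
  simp only [hessian_sq_add_eq_sum_energyDensity hs hu hz]
  exact Pconv_sum hs hz (fun i ↦ isBddCont_energyDensity hs (hu.pderiv i) hz) x

end Bochner

theorem fractional_Bochner_A_general (n : ℕ) (hn : 1 ≤ n) (s : ℝ) (hs0 : 0 < s) (hs1 : s < 1)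
    (u : En n → ℝ) (hu : ContDiff ℝ ∞ u) (huc : HasCompactSupport u) :
    ContDiff ℝ ∞ (Gamma1 n s u u)
    ∧ ∀ x : En n,
        IntegrableOn (fun z ↦
          Pconv n s z
            (fun y ↦
              (∑ i, ∑ j, (pd i (pd j (fun y' ↦ CSext n s u y' z)) y) ^ 2)
                + ∑ i, (pd i (fun y' ↦ deriv (CSext n s u y') z) y) ^ 2) x
            * z ^ (1 - 2 * s)) (Ioi 0)
        ∧ (1 / 2) * lapX (Gamma1 n s u u) x - Gamma1 n s u (lapX u) x =
          betaS s *
            ∫ z in Ioi (0 : ℝ),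
              Pconv n s z
                (fun y ↦
                  (∑ i, ∑ j, (pd i (pd j (fun y' ↦ CSext n s u y' z)) y) ^ 2)
                    + ∑ i, (pd i (fun y' ↦ deriv (CSext n s u y') z) y) ^ 2) x
                * z ^ (1 - 2 * s) := by
  have : NeZero n := ⟨by omega⟩
  have hu : IsTestFun u := ⟨hu, huc⟩
  refine ⟨contDiff_Gamma1 hs0 hs1 hu hu, fun x ↦ ?_⟩
  have henergy (i : Fin n) := (energy_identity hs0 hs1 (hu.pderiv i) x).1
  have hdensity := fun z (hz : z ∈ Ioi (0 : ℝ)) ↦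
    congrArg (· * z ^ (1 - 2 * s)) (Pconv_hessian_sq_add hs0 hu hz x)
  simp only [Finset.sum_mul] at hdensity
  constructor
  · exact (integrableOn_congr_fun hdensity measurableSet_Ioi).2
      (integrable_finsetSum _ fun i _ ↦ henergy i)
  · rw [half_lapX_Gamma1_sub_Gamma1_lapX hs0 hs1 hu,
      setIntegral_congr_fun measurableSet_Ioi hdensity,
      integral_finsetSum _ fun i _ ↦ henergy i, Finset.mul_sum]
    exact Finset.sum_congr rfl fun i _ ↦
      Gamma1_self_eq_integral_energyDensity hs0 hs1 (hu.pderiv i) x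

/-- **Fractional Bochner's formula, `𝒜`-form** (Euclidean case):
`½ Δ(Γ₁(u,u)) - Γ₁(u, Δu) = β_s ∫₀^∞ (P_z^{(s)} ∗ (|∇²_x U|² + |∇_x ∂_z U|²)) z^{1-2s} dz`,
and `Γ₁(u,u)` is twice continuously differentiable. -/
theorem fractional_Bochner_A (n : ℕ) (hn : 1 ≤ n) (s : ℝ) (hs0 : 0 < s) (hs1 : s < 1)
    (u : En n → ℝ) (hu : ContDiff ℝ (⊤ : ℕ∞) u) (huc : HasCompactSupport u)
    (hint : ∫⁻ p in (univ : Set (En n)) ×ˢ Ioi (0 : ℝ),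
      ENNReal.ofReal
        (p.2 ^ (1 - 2 * s) *
          ((∑ i, ∑ j, (pd i (pd j (fun y => CSext n s u y p.2)) p.1) ^ 2)
            + ∑ i, (pd i (fun y => deriv (CSext n s u y) p.2) p.1) ^ 2)) < ⊤) :
    ContDiff ℝ 2 (Gamma1 n s u u)
    ∧ ∀ x : En n,
        (1 / 2) * lapX (Gamma1 n s u u) x - Gamma1 n s u (lapX u) x =
          betaS s *
            ∫ z in Ioi (0 : ℝ),
              Pconv n s z
                (fun y =>
                  (∑ i, ∑ j, (pd i (pd j (fun y' => CSext n s u y' z)) y) ^ 2)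
                    + ∑ i, (pd i (fun y' => deriv (CSext n s u y') z) y) ^ 2) x
                * z ^ (1 - 2 * s) := by
  obtain ⟨hsmooth, hformula⟩ := fractional_Bochner_A_general n hn s hs0 hs1 u hu huc
  exact ⟨contDiff_infty.1 hsmooth 2, fun x ↦ (hformula x).2⟩
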